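/- Let k ≥ 3 and let m, s be natural numbers with 1 ≤ m ≤ k−1 and s > m. Let X be sufficiently large in terms of s and k, and suppose q = p_1⋯p_{m−1} where p_i ∈ Y_i for 1 ≤ i ≤ m−1. Let 𝒫_m be any set of 2sk⁴ primes contained in Y_m, and let b be an integer with 0 ≤ b < q and (b,q) = 1. Then there is a constant C depending at most on s and k such that I_{s,m}(X;q,b) ≤ C·max_{p∈𝒫_m} p^{2s−2m+3m(m+1)/2}·max_{a∈ℬ(p)} I_{s−m,m+1}(X;pq,b+aq), where ℬ(p) denotes the set of integers a with 0 ≤ a < p and (b+aq, pq) = 1. -/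

import Mathlib

/-- I_{s,m}(X;q,b): the number of integral solutions of the system (8.1), i.e. of
∑_i ((q x_i + b)^k - (q y_i + b)^k) = 0 and ∑_i (x_i^j - y_i^j) = 0 (1 ≤ j ≤ m-1),
with 0 ≤ x_i, y_i ≤ X/q. -/
noncomputable def Icount (s k m : ℕ) (X : ℝ) (q : ℕ) (b : ℤ) : ℕ :=
  Set.ncard {xy : (Fin s → ℤ) × (Fin s → ℤ) |
    (∀ i, 0 ≤ xy.1 i ∧ (xy.1 i : ℝ) ≤ X / q) ∧
    (∀ i, 0 ≤ xy.2 i ∧ (xy.2 i : ℝ) ≤ X / q) ∧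
    (∑ i, (((q:ℤ) * xy.1 i + b)^k - ((q:ℤ) * xy.2 i + b)^k) = 0) ∧
    ∀ j ∈ Finset.Icc 1 (m-1), ∑ i, ((xy.1 i)^j - (xy.2 i)^j) = 0}

/-- The additive energy of `φ` on `A`: the number of pairs in `A` with equal image under `φ`. -/
def energyOn {τ Γ : Type*} [DecidableEq Γ] (φ : τ → Γ) (A : Finset τ) : ℕ :=
  ((A ×ˢ A).filter fun z => φ z.1 = φ z.2).card

section Energy

variable {τ σ Γ Δ : Type*} [DecidableEq Γ] [DecidableEq Δ]

lemma energyOn_eq_sum_sq (φ : τ → Γ) (A : Finset τ) (H : Finset Γ) (hH : ∀ x ∈ A, φ x ∈ H) :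
    energyOn φ A = ∑ h ∈ H, (A.filter fun x => φ x = h).card ^ 2 := by
  classical
  unfold energyOn
  rw [Finset.card_eq_sum_card_fiberwise (f := fun z : τ × τ => φ z.1) (t := H)]
  · refine Finset.sum_congr rfl fun h _ => ?_
    rw [sq, ← Finset.card_product]
    congr 1
    ext ⟨x, y⟩
    simp only [Finset.mem_filter, Finset.mem_product]
    constructor
    · rintro ⟨⟨⟨hx, hy⟩, hxy⟩, rfl⟩
      exact ⟨⟨hx, rfl⟩, hy, hxy.symm⟩
    · rintro ⟨⟨hx, rfl⟩, hy, hxy⟩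
      exact ⟨⟨⟨hx, hy⟩, hxy.symm⟩, rfl⟩
  · rintro ⟨x, y⟩ hz
    have hz' := Finset.mem_coe.mp hz
    simp only [Finset.mem_filter, Finset.mem_product] at hz'
    exact Finset.mem_coe.mpr (hH _ hz'.1.1)

lemma card_le_energyOn (φ : τ → Γ) (A : Finset τ) : A.card ≤ energyOn φ A := by
  classical
  refine Finset.card_le_card_of_injOn (fun x => (x, x)) ?_ ?_
  · intro x hx
    simpa using hx
  · intro x _ y _ h
    exact (Prod.ext_iff.mp h).1

lemma energyOn_congr (φ : τ → Γ) (φ' : τ → Δ) (A : Finset τ)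
    (h : ∀ x ∈ A, ∀ y ∈ A, φ x = φ y ↔ φ' x = φ' y) : energyOn φ A = energyOn φ' A := by
  unfold energyOn
  congr 1
  refine Finset.filter_congr ?_
  rintro ⟨x, y⟩ hz
  rw [Finset.mem_product] at hz
  exact h x hz.1 y hz.2

lemma energyOn_le_of_injOn (φ : τ → Γ) (φ' : σ → Δ) (A : Finset τ) (B : Finset σ) (f : τ → σ)
    (hf : Set.InjOn f A) (hAB : ∀ x ∈ A, f x ∈ B)
    (h : ∀ x ∈ A, ∀ y ∈ A, φ x = φ y → φ' (f x) = φ' (f y)) : energyOn φ A ≤ energyOn φ' B := by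
  classical
  refine Finset.card_le_card_of_injOn (fun z => (f z.1, f z.2)) ?_ ?_
  · rintro ⟨x, y⟩ hz
    simp only [Finset.coe_filter, Finset.mem_product, Set.mem_ofPred_eq] at hz ⊢
    exact ⟨⟨hAB _ hz.1.1, hAB _ hz.1.2⟩, h _ hz.1.1 _ hz.1.2 hz.2⟩
  · rintro ⟨x, y⟩ hz ⟨x', y'⟩ hz' he
    simp only [Finset.coe_filter, Finset.mem_product, Set.mem_ofPred_eq] at hz hz'
    simp only [Prod.mk.injEq] at he
    exact Prod.ext (hf hz.1.1 hz'.1.1 he.1) (hf hz.1.2 hz'.1.2 he.2)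

lemma energyOn_le_of_subset_biUnion [DecidableEq τ] {κ : Type*} (φ : τ → Γ) (A : Finset τ)
    (L : Finset κ) (B : κ → Finset τ) (h : A ⊆ L.biUnion B) :
    energyOn φ A ≤ L.card * ∑ l ∈ L, energyOn φ (B l) := by
  classical
  set H := (A ∪ L.biUnion B).image φ with hH
  have hA : ∀ x ∈ A, φ x ∈ H := fun x hx =>
    Finset.mem_image_of_mem _ (Finset.mem_union_left _ hx)
  have hB : ∀ l ∈ L, ∀ x ∈ B l, φ x ∈ H := fun l hl x hx =>
    Finset.mem_image_of_mem _ (Finset.mem_union_right _ (Finset.mem_biUnion.mpr ⟨l, hl, hx⟩))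
  rw [energyOn_eq_sum_sq φ A H hA,
    Finset.sum_congr rfl fun l hl => energyOn_eq_sum_sq φ (B l) H (hB l hl),
    Finset.sum_comm, Finset.mul_sum]
  refine Finset.sum_le_sum fun t _ => ?_
  have h1 : (A.filter fun x => φ x = t).card ≤ ∑ l ∈ L, ((B l).filter fun x => φ x = t).card := by
    refine le_trans (Finset.card_le_card ?_) Finset.card_biUnion_le
    intro x hx
    rw [Finset.mem_filter] at hx
    obtain ⟨l, hl, hxl⟩ := Finset.mem_biUnion.mp (h hx.1)
    exact Finset.mem_biUnion.mpr ⟨l, hl, Finset.mem_filter.mpr ⟨hxl, hx.2⟩⟩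
  exact (Nat.pow_le_pow_left h1 2).trans sq_sum_le_card_mul_sum_sq

lemma card_sub_eq_le_energyOn [AddCommGroup Γ] (φ : τ → Γ) (A : Finset τ) (h : Γ) :
    ((A ×ˢ A).filter fun z => φ z.1 - φ z.2 = h).card ≤ energyOn φ A := by
  classical
  set H := A.image φ with hH
  set r : Γ → ℕ := fun t => (A.filter fun x => φ x = t).card with hr
  have h1 : ((A ×ˢ A).filter fun z => φ z.1 - φ z.2 = h).card = ∑ t ∈ H, r (t + h) * r t := by
    rw [Finset.card_eq_sum_card_fiberwise (f := fun z : τ × τ => φ z.2) (t := H)]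
    · refine Finset.sum_congr rfl fun t _ => ?_
      rw [hr, ← Finset.card_product]
      congr 1
      ext ⟨x, y⟩
      simp only [Finset.mem_filter, Finset.mem_product]
      constructor
      · rintro ⟨⟨⟨hx, hy⟩, hxy⟩, rfl⟩
        exact ⟨⟨hx, by rw [← hxy]; abel⟩, hy, rfl⟩
      · rintro ⟨⟨hx, hxt⟩, hy, rfl⟩
        exact ⟨⟨⟨hx, hy⟩, by rw [hxt]; abel⟩, rfl⟩
    · rintro ⟨x, y⟩ hz
      have hz' := Finset.mem_coe.mp hz
      simp only [Finset.mem_filter, Finset.mem_product] at hz'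
      exact Finset.mem_coe.mpr (Finset.mem_image_of_mem _ hz'.1.2)
  have h2 : energyOn φ A = ∑ t ∈ H, r t ^ 2 :=
    energyOn_eq_sum_sq φ A H fun x hx => Finset.mem_image_of_mem _ hx
  have h3 : ∑ t ∈ H, r (t + h) ^ 2 ≤ energyOn φ A := by
    rw [energyOn_eq_sum_sq φ A (H ∪ H.image (· + h)) fun x hx =>
      Finset.mem_union_left _ (Finset.mem_image_of_mem _ hx)]
    rw [← Finset.sum_image (g := fun t => t + h) (f := fun t => r t ^ 2)
      (fun a _ b _ hab => add_right_cancel hab)]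
    exact Finset.sum_le_sum_of_subset Finset.subset_union_right
  have h4 : 2 * ∑ t ∈ H, r (t + h) * r t ≤ ∑ t ∈ H, r (t + h) ^ 2 + ∑ t ∈ H, r t ^ 2 := by
    rw [Finset.mul_sum, ← Finset.sum_add_distrib]
    refine Finset.sum_le_sum fun t _ => ?_
    have := two_mul_le_add_sq (r (t + h)) (r t)
    linarith
  rw [h1]
  omega

end Energy

section Fourier

lemma addChar_sum_eq_prod {ι G : Type*} [AddCommGroup G] (χ : AddChar G ℂ) (S : Finset ι) (f : ι → G) :
    χ (∑ i ∈ S, f i) = ∏ i ∈ S, χ (f i) := by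
  classical
  induction S using Finset.induction_on with
  | empty => simp
  | insert a S ha ih => rw [Finset.sum_insert ha, Finset.prod_insert ha, AddChar.map_add_eq_mul, ih]

variable {τ G : Type*} [AddCommGroup G] [Fintype G] [DecidableEq G]

lemma card_mul_energyOn (φ : τ → G) (A : Finset τ) :
    (Fintype.card G : ℝ) * energyOn φ A = ∑ χ : AddChar G ℂ, ‖∑ x ∈ A, χ (φ x)‖ ^ 2 := by
  classical
  have key : ((Fintype.card G : ℝ) * energyOn φ A : ℂ) =
      ∑ χ : AddChar G ℂ, ((‖∑ x ∈ A, χ (φ x)‖ ^ 2 : ℝ) : ℂ) := by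
    have h1 : ∀ χ : AddChar G ℂ, ((‖∑ x ∈ A, χ (φ x)‖ ^ 2 : ℝ) : ℂ) =
        ∑ z ∈ A ×ˢ A, χ (φ z.1 - φ z.2) := by
      intro χ
      rw [Complex.ofReal_pow, ← Complex.mul_conj', map_sum, Finset.sum_mul_sum,
        Finset.sum_product]
      refine Finset.sum_congr rfl fun x _ => Finset.sum_congr rfl fun y _ => ?_
      rw [sub_eq_add_neg, AddChar.map_add_eq_mul, AddChar.map_neg_eq_conj]
    simp_rw [h1]
    rw [Finset.sum_comm]
    simp_rw [AddChar.sum_apply_eq_ite, sub_eq_zero]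
    rw [← Finset.sum_filter, Finset.sum_const, energyOn, nsmul_eq_mul]
    push_cast
    ring
  exact_mod_cast key

lemma energyOn_prod_le_sum_classes {κ : Type*} (ψ : ℤ → G) (Φ : τ → G) (T : Finset τ) (r : ℕ)
    (hr : 1 ≤ r) (L : Finset κ) (V : κ → Finset ℤ) (hV : (L : Set κ).PairwiseDisjoint V) :
    (energyOn (fun z : τ × (Fin r → ℤ) => Φ z.1 + ∑ l, ψ (z.2 l))
      (T ×ˢ Fintype.piFinset fun _ => L.biUnion V) : ℝ) ≤
    (L.card : ℝ) ^ (2 * r - 1) * ∑ a ∈ L,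
      (energyOn (fun z : τ × (Fin r → ℤ) => Φ z.1 + ∑ l, ψ (z.2 l))
        (T ×ˢ Fintype.piFinset fun _ => V a) : ℝ) := by
  classical
  have hsum : ∀ (χ : AddChar G ℂ) (W : Finset ℤ),
      ∑ z ∈ T ×ˢ Fintype.piFinset (fun _ : Fin r => W), χ (Φ z.1 + ∑ l, ψ (z.2 l)) =
        (∑ t ∈ T, χ (Φ t)) * (∑ x ∈ W, χ (ψ x)) ^ r := by
    intro χ W
    have h1 : (∑ x ∈ W, χ (ψ x)) ^ r = ∏ _l : Fin r, ∑ x ∈ W, χ (ψ x) := by simp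
    rw [h1, Finset.prod_univ_sum, Finset.sum_mul_sum, Finset.sum_product]
    refine Finset.sum_congr rfl fun t _ => Finset.sum_congr rfl fun u _ => ?_
    rw [AddChar.map_add_eq_mul, addChar_sum_eq_prod]
  have hG : (0 : ℝ) < Fintype.card G := by
    exact_mod_cast Fintype.card_pos
  refine le_of_mul_le_mul_left ?_ hG
  rw [card_mul_energyOn, mul_left_comm, Finset.mul_sum]
  simp_rw [card_mul_energyOn]
  rw [Finset.sum_comm, Finset.mul_sum]
  refine Finset.sum_le_sum fun χ _ => ?_
  simp_rw [hsum]
  rw [Finset.sum_biUnion hV]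
  obtain ⟨n, hn⟩ : ∃ n, 2 * r = n + 1 := ⟨2 * r - 1, by omega⟩
  have h2 : ∀ c d : ℂ, ‖c * d ^ r‖ ^ 2 = ‖c‖ ^ 2 * ‖d‖ ^ (n + 1) := by
    intro c d
    rw [norm_mul, norm_pow, mul_pow, ← pow_mul, mul_comm r 2, hn]
  simp_rw [h2]
  rw [← Finset.mul_sum, mul_left_comm, hn, Nat.add_sub_cancel]
  gcongr
  refine le_trans (pow_le_pow_left₀ (norm_nonneg _) (norm_sum_le _ _) _) ?_
  exact pow_sum_le_card_mul_sum_pow (fun _ _ => norm_nonneg _) n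

lemma mul_pow_le_add_pow {a c η : ℝ} (ha : 0 ≤ a) (hc : 0 ≤ c) (hη : 0 < η) (n : ℕ) :
    a ^ 2 * c ^ n ≤ η ^ 2 * c ^ (n + 2) + (η⁻¹) ^ n * a ^ (n + 2) := by
  rcases le_total a (η * c) with h | h
  · have h1 : a ^ 2 * c ^ n ≤ (η * c) ^ 2 * c ^ n := by gcongr
    have h2 : 0 ≤ (η⁻¹) ^ n * a ^ (n + 2) := by positivity
    calc a ^ 2 * c ^ n ≤ (η * c) ^ 2 * c ^ n := h1
      _ = η ^ 2 * c ^ (n + 2) := by ring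
      _ ≤ _ := by linarith
  · have h1 : c ≤ η⁻¹ * a := by
      rw [inv_mul_eq_div, le_div_iff₀ hη]
      linarith
    have h2 : 0 ≤ η ^ 2 * c ^ (n + 2) := by positivity
    calc a ^ 2 * c ^ n ≤ a ^ 2 * (η⁻¹ * a) ^ n := by gcongr
      _ = (η⁻¹) ^ n * a ^ (n + 2) := by ring
      _ ≤ _ := by linarith

lemma energyOn_eq_coord_le_of_fintype {ι : Type*} [Fintype ι] [DecidableEq ι] (ψ : ℤ → G)
    (W : Finset ℤ) {i j : ι} (hij : i ≠ j) {η : ℝ} (hη : 0 < η)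
    (hdouble : energyOn (fun x : ι → ℤ => ∑ l, (2 : ℕ) • ψ (x l)) (Fintype.piFinset fun _ => W) =
      energyOn (fun x : ι → ℤ => ∑ l, ψ (x l)) (Fintype.piFinset fun _ => W)) :
    (energyOn (fun x : ι → ℤ => ∑ l, ψ (x l))
      ((Fintype.piFinset fun _ => W).filter fun x => x i = x j) : ℝ) ≤
    η ^ 2 * energyOn (fun x : ι → ℤ => ∑ l, ψ (x l)) (Fintype.piFinset fun _ => W) +
    (η⁻¹) ^ (Fintype.card ι - 2) *
      √(energyOn (fun x : ι → ℤ => ∑ l, ψ (x l)) (Fintype.piFinset fun _ => W)) := by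
  classical
  set E := energyOn (fun x : ι → ℤ => ∑ l, ψ (x l)) (Fintype.piFinset fun _ => W) with hE
  obtain ⟨n, hn⟩ : ∃ n, Fintype.card ι = n + 2 := by
    have : ({i, j} : Finset ι).card ≤ Fintype.card ι := Finset.card_le_univ _
    rw [Finset.card_pair hij] at this
    exact ⟨_, (Nat.sub_add_cancel this).symm⟩
  set f : AddChar G ℂ → ℂ := fun χ => ∑ x ∈ W, χ (ψ x) with hf
  set g : AddChar G ℂ → ℂ := fun χ => ∑ x ∈ W, χ (ψ x) ^ 2 with hg
  have hfull : ∀ χ : AddChar G ℂ, ∑ x ∈ Fintype.piFinset (fun _ : ι => W), χ (∑ l, ψ (x l)) =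
      f χ ^ (n + 2) := by
    intro χ
    have h1 : f χ ^ (n + 2) = ∏ _l : ι, ∑ x ∈ W, χ (ψ x) := by simp [hf, hn]
    rw [h1, Finset.prod_univ_sum]
    exact Finset.sum_congr rfl fun u _ => addChar_sum_eq_prod _ _ _
  have hfull2 : ∀ χ : AddChar G ℂ,
      ∑ x ∈ Fintype.piFinset (fun _ : ι => W), χ (∑ l, (2 : ℕ) • ψ (x l)) = g χ ^ (n + 2) := by
    intro χ
    have h1 : g χ ^ (n + 2) = ∏ _l : ι, ∑ x ∈ W, χ (ψ x) ^ 2 := by simp [hg, hn]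
    rw [h1, Finset.prod_univ_sum]
    refine Finset.sum_congr rfl fun u _ => ?_
    rw [addChar_sum_eq_prod]
    exact Finset.prod_congr rfl fun l _ => AddChar.map_nsmul_eq_pow _ _ _
  have hdiag : ∀ χ : AddChar G ℂ,
      ∑ x ∈ (Fintype.piFinset (fun _ : ι => W)).filter (fun x => x i = x j), χ (∑ l, ψ (x l)) =
        g χ * f χ ^ n := by
    intro χ
    have hset : (Fintype.piFinset (fun _ : ι => W)).filter (fun x => x i = x j) =
        W.biUnion fun a => Fintype.piFinset fun l : ι => if l = i ∨ l = j then {a} else W := by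
      ext x
      simp only [Finset.mem_filter, Fintype.mem_piFinset, Finset.mem_biUnion]
      constructor
      · rintro ⟨hx, hxij⟩
        refine ⟨x i, hx i, fun l => ?_⟩
        split_ifs with hl
        · rcases hl with rfl | rfl
          · simp
          · simp [hxij]
        · exact hx l
      · rintro ⟨a, ha, hx⟩
        have hi : x i = a := by simpa using hx i
        have hj : x j = a := by simpa using hx j
        refine ⟨fun l => ?_, hi.trans hj.symm⟩
        have := hx l
        split_ifs at this with hl
        · rw [Finset.mem_singleton] at this
          rwa [this]
        · exact this
    rw [hset, Finset.sum_biUnion]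
    · rw [hg, Finset.sum_mul]
      refine Finset.sum_congr rfl fun a _ => ?_
      have h1 : χ (ψ a) ^ 2 * f χ ^ n =
          ∏ l : ι, ∑ x ∈ (if l = i ∨ l = j then ({a} : Finset ℤ) else W), χ (ψ x) := by
        have h2 : ∀ l : ι, ∑ x ∈ (if l = i ∨ l = j then ({a} : Finset ℤ) else W), χ (ψ x) =
            if l ∈ ({i, j} : Finset ι) then χ (ψ a) else f χ := by
          intro l
          by_cases hl : l = i ∨ l = j
          · simp [hl]
          · simp [hl, hf]
        simp_rw [h2]
        rw [Finset.prod_ite, Finset.prod_const, Finset.prod_const]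
        have h3 : (Finset.univ.filter fun l : ι => l ∈ ({i, j} : Finset ι)) = {i, j} := by
          ext; simp
        have h4 : (Finset.univ.filter fun l : ι => l ∉ ({i, j} : Finset ι)) = {i, j}ᶜ := by
          ext; simp
        rw [h3, h4, Finset.card_compl, Finset.card_pair hij, hn, Nat.add_sub_cancel]
      rw [h1, Finset.prod_univ_sum]
      exact Finset.sum_congr rfl fun u _ => addChar_sum_eq_prod _ _ _
    · intro a _ a' _ haa'
      rw [Function.onFun, Finset.disjoint_left]
      intro x hx hx'
      rw [Fintype.mem_piFinset] at hx hx'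
      have h1 : x i = a := by simpa using hx i
      have h2 : x i = a' := by simpa using hx' i
      exact haa' (h1.symm.trans h2)
  have hG : (0 : ℝ) < Fintype.card G := by exact_mod_cast Fintype.card_pos
  have hE1 : (Fintype.card G : ℝ) * E = ∑ χ : AddChar G ℂ, (‖f χ‖ ^ 2) ^ (n + 2) := by
    rw [hE, card_mul_energyOn]
    refine Finset.sum_congr rfl fun χ _ => ?_
    rw [hfull, norm_pow, ← pow_mul, ← pow_mul, mul_comm]
  have hE2 : (Fintype.card G : ℝ) * E = ∑ χ : AddChar G ℂ, (‖g χ‖ ^ (n + 2)) ^ 2 := by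
    rw [← hdouble, card_mul_energyOn]
    refine Finset.sum_congr rfl fun χ _ => ?_
    rw [hfull2, norm_pow]
  have hE3 : ∑ χ : AddChar G ℂ, ‖g χ‖ ^ (n + 2) ≤ Fintype.card G * √E := by
    refine le_of_sq_le_sq ?_ (by positivity)
    rw [mul_pow, Real.sq_sqrt (by positivity), sq (Fintype.card G : ℝ), mul_assoc, hE2]
    refine sq_sum_le_card_mul_sum_sq.trans ?_
    rw [Finset.card_univ, AddChar.card_eq]
  refine le_of_mul_le_mul_left ?_ hG
  rw [card_mul_energyOn, hn, Nat.add_sub_cancel, mul_add, mul_left_comm, mul_left_comm _ (_ ^ n),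
    hE1]
  calc _ ≤ ∑ χ : AddChar G ℂ, (η ^ 2 * (‖f χ‖ ^ 2) ^ (n + 2) + (η⁻¹) ^ n * ‖g χ‖ ^ (n + 2)) := by
        refine Finset.sum_le_sum fun χ _ => ?_
        rw [hdiag, norm_mul, norm_pow, mul_pow, ← pow_mul, mul_comm n 2, pow_mul]
        exact mul_pow_le_add_pow (norm_nonneg _) (by positivity) hη n
    _ ≤ _ := by
        rw [Finset.sum_add_distrib, ← Finset.mul_sum, ← Finset.mul_sum]
        gcongr

end Fourier

section IntegerVectors

variable {κ : Type*} [Fintype κ]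

/-- Coordinatewise reduction of an integer vector modulo `N`. -/
def reduceVec (κ : Type*) (N : ℕ) : (κ → ℤ) →+ (κ → ZMod N) where
  toFun v i := (v i : ZMod N)
  map_zero' := by ext; simp
  map_add' v w := by ext; simp

lemma exists_reduceVec_injOn (S : Finset (κ → ℤ)) :
    ∃ N : ℕ, N ≠ 0 ∧ ∀ v ∈ S, ∀ w ∈ S, reduceVec κ N v = reduceVec κ N w → v = w := by
  set B : ℕ := ∑ v ∈ S, ∑ i, (v i).natAbs with hB
  refine ⟨2 * B + 1, by omega, fun v hv w hw h => ?_⟩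
  have hle : ∀ v ∈ S, ∀ i, (v i).natAbs ≤ B := fun v hv i =>
    (Finset.single_le_sum (f := fun i => (v i).natAbs) (fun _ _ => Nat.zero_le _)
      (Finset.mem_univ i)).trans
    (Finset.single_le_sum (f := fun v : κ → ℤ => ∑ i, (v i).natAbs) (fun _ _ => Nat.zero_le _) hv)
  ext i
  have h1 : ((v i : ℤ) : ZMod (2 * B + 1)) = (w i : ℤ) := congrFun h i
  rw [ZMod.intCast_eq_intCast_iff_dvd_sub] at h1
  have h2 := hle v hv i
  have h3 := hle w hw i
  have h4 : w i - v i = 0 := by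
    refine Int.eq_zero_of_abs_lt_dvd h1 ?_
    rw [abs_lt]
    push_cast
    constructor <;> omega
  omega

lemma energyOn_prod_le_sum_classes_int {τ ν : Type*} (ψ : ℤ → κ → ℤ) (Φ : τ → κ → ℤ)
    (T : Finset τ) (r : ℕ) (hr : 1 ≤ r) (L : Finset ν) (V : ν → Finset ℤ)
    (hV : (L : Set ν).PairwiseDisjoint V) :
    (energyOn (fun z : τ × (Fin r → ℤ) => Φ z.1 + ∑ l, ψ (z.2 l))
      (T ×ˢ Fintype.piFinset fun _ => L.biUnion V) : ℝ) ≤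
    (L.card : ℝ) ^ (2 * r - 1) * ∑ a ∈ L,
      (energyOn (fun z : τ × (Fin r → ℤ) => Φ z.1 + ∑ l, ψ (z.2 l))
        (T ×ˢ Fintype.piFinset fun _ => V a) : ℝ) := by
  classical
  set φ : τ × (Fin r → ℤ) → κ → ℤ := fun z => Φ z.1 + ∑ l, ψ (z.2 l) with hφ
  set A := T ×ˢ Fintype.piFinset fun _ : Fin r => L.biUnion V with hA
  obtain ⟨N, hN0, hN⟩ := exists_reduceVec_injOn (A.image φ)
  have : NeZero N := ⟨hN0⟩
  set φ' : τ × (Fin r → ℤ) → κ → ZMod N :=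
    fun z => reduceVec κ N (Φ z.1) + ∑ l, reduceVec κ N (ψ (z.2 l)) with hφ'
  have hred : ∀ z, φ' z = reduceVec κ N (φ z) := fun z => by simp [hφ, hφ', map_sum]
  have hE : ∀ B ⊆ A, energyOn φ B = energyOn φ' B := fun B hB =>
    energyOn_congr _ _ _ fun x hx y hy => by
      rw [hred, hred]
      exact ⟨fun h => by rw [h], fun h => hN _ (Finset.mem_image_of_mem _ (hB hx)) _
        (Finset.mem_image_of_mem _ (hB hy)) h⟩
  rw [hE A subset_rfl, Finset.sum_congr rfl fun a ha => by
    rw [hE _ (Finset.product_subset_product subset_rfl (Fintype.piFinset_subset _ _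
      fun _ => Finset.subset_biUnion_of_mem V ha))]]
  exact energyOn_prod_le_sum_classes (fun x => reduceVec κ N (ψ x)) (fun t => reduceVec κ N (Φ t))
    T r hr L V hV

lemma energyOn_eq_coord_le {ι : Type*} [Fintype ι] [DecidableEq ι] (ψ : ℤ → κ → ℤ)
    (W : Finset ℤ) {i j : ι} (hij : i ≠ j) {η : ℝ} (hη : 0 < η) :
    (energyOn (fun x : ι → ℤ => ∑ l, ψ (x l))
      ((Fintype.piFinset fun _ => W).filter fun x => x i = x j) : ℝ) ≤
    η ^ 2 * energyOn (fun x : ι → ℤ => ∑ l, ψ (x l)) (Fintype.piFinset fun _ => W) +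
    (η⁻¹) ^ (Fintype.card ι - 2) *
      √(energyOn (fun x : ι → ℤ => ∑ l, ψ (x l)) (Fintype.piFinset fun _ => W)) := by
  classical
  set φ : (ι → ℤ) → κ → ℤ := fun x => ∑ l, ψ (x l) with hφ
  set A := Fintype.piFinset fun _ : ι => W with hA
  obtain ⟨N, hN0, hN⟩ := exists_reduceVec_injOn (A.image φ ∪ A.image fun x => (2 : ℕ) • φ x)
  have : NeZero N := ⟨hN0⟩
  set φ' : (ι → ℤ) → κ → ZMod N := fun x => ∑ l, reduceVec κ N (ψ (x l)) with hφ'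
  have hred : ∀ z, φ' z = reduceVec κ N (φ z) := fun z => by simp [hφ, hφ', map_sum]
  have hE : ∀ B ⊆ A, energyOn φ B = energyOn φ' B := fun B hB =>
    energyOn_congr _ _ _ fun x hx y hy => by
      rw [hred, hred]
      exact ⟨fun h => by rw [h], fun h => hN _ (Finset.mem_union_left _
        (Finset.mem_image_of_mem _ (hB hx))) _ (Finset.mem_union_left _
        (Finset.mem_image_of_mem _ (hB hy))) h⟩
  have hE2 : energyOn (fun x : ι → ℤ => ∑ l, (2 : ℕ) • reduceVec κ N (ψ (x l))) A =
      energyOn φ' A := by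
    refine energyOn_congr _ _ _ fun x hx y hy => ?_
    rw [← Finset.smul_sum, ← Finset.smul_sum]
    refine ⟨fun h => ?_, fun h => congrArg ((2 : ℕ) • ·) h⟩
    rw [hred, hred]
    congr 1
    have h1 : (2 : ℕ) • φ x = (2 : ℕ) • φ y := by
      refine hN _ (Finset.mem_union_right _ (Finset.mem_image_of_mem _ hx)) _
        (Finset.mem_union_right _ (Finset.mem_image_of_mem _ hy)) ?_
      rw [map_nsmul, map_nsmul, ← hred, ← hred]
      exact h
    exact nsmul_right_injective two_ne_zero h1
  rw [hE A subset_rfl, hE _ (Finset.filter_subset _ _)]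
  exact energyOn_eq_coord_le_of_fintype (fun x => reduceVec κ N (ψ x)) W hij hη hE2

lemma card_mul_energyOn_coord_eq_le {ι Γ : Type*} [Fintype ι] [DecidableEq ι] [AddCommGroup Γ]
    [DecidableEq Γ] (ψ : ℤ → Γ) (W : Finset ℤ) (c : ℤ) (i : ι) :
    W.card * energyOn (fun x : ι → ℤ => ∑ l, ψ (x l))
      ((Fintype.piFinset fun _ => W).filter fun x => x i = c) ≤
    energyOn (fun x : ι → ℤ => ∑ l, ψ (x l)) (Fintype.piFinset fun _ => W) := by
  classical
  unfold energyOn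
  rw [← Finset.card_product]
  refine Finset.card_le_card_of_injOn
    (fun z => (Function.update z.2.1 i z.1, Function.update z.2.2 i z.1)) ?_ ?_
  · rintro ⟨t, x, y⟩ hz
    simp only [Finset.coe_product, Set.mem_prod, Finset.mem_coe, Finset.mem_filter,
      Finset.mem_product, Fintype.mem_piFinset] at hz ⊢
    obtain ⟨ht, ⟨⟨hx, hxi⟩, hy, hyi⟩, hxy⟩ := hz
    have hup : ∀ u : ι → ℤ, (∀ l, u l ∈ W) → ∀ l, Function.update u i t l ∈ W := by
      intro u hu l
      by_cases hl : l = i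
      · subst hl; simpa using ht
      · simpa [hl] using hu l
    refine ⟨⟨hup x hx, hup y hy⟩, ?_⟩
    have hs : ∀ u : ι → ℤ, u i = c → ∑ l, ψ (Function.update u i t l) =
        ∑ l, ψ (u l) + (ψ t - ψ c) := by
      intro u hu
      rw [← Finset.add_sum_erase _ _ (Finset.mem_univ i),
        ← Finset.add_sum_erase _ (fun l => ψ (u l)) (Finset.mem_univ i)]
      rw [Finset.sum_congr rfl (g := fun l => ψ (u l)) fun l hl => by
        rw [Function.update_of_ne (Finset.ne_of_mem_erase hl)]]
      rw [Function.update_self, hu]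
      abel
    rw [hs x hxi, hs y hyi, hxy]
  · rintro ⟨t, x, y⟩ hz ⟨t', x', y'⟩ hz' h
    simp only [Finset.coe_product, Set.mem_prod, Finset.mem_coe, Finset.mem_filter,
      Finset.mem_product, Fintype.mem_piFinset] at hz hz'
    obtain ⟨-, ⟨⟨-, hxi⟩, -, hyi⟩, -⟩ := hz
    obtain ⟨-, ⟨⟨-, hxi'⟩, -, hyi'⟩, -⟩ := hz'
    simp only [Prod.mk.injEq] at h
    have ht : t = t' := by simpa using congrFun h.1 i
    have hinj : ∀ u u' : ι → ℤ, u i = c → u' i = c →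
        Function.update u i t = Function.update u' i t' → u = u' := by
      intro u u' hu hu' he
      ext l
      by_cases hl : l = i
      · rw [hl, hu, hu']
      · simpa [hl] using congrFun he l
    rw [ht, hinj x x' hxi hxi' h.1, hinj y y' hyi hyi' h.2]

end IntegerVectors

section NonsingularCount

open MvPolynomial

lemma esymm_eq_of_psum_eq {m : ℕ} {R : Type*} [CommRing R] (t u : Fin m → R) (n : ℕ)
    (hunit : ∀ j : ℕ, 1 ≤ j → j ≤ n → IsUnit (j : R))
    (h : ∀ j : ℕ, 1 ≤ j → j ≤ n → ∑ i, t i ^ j = ∑ i, u i ^ j) :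
    ∀ j ≤ n, aeval t (esymm (Fin m) ℤ j) = aeval u (esymm (Fin m) ℤ j) := by
  intro j
  induction j using Nat.strong_induction_on with
  | _ j ih =>
    intro hj
    rcases Nat.eq_zero_or_pos j with rfl | hpos
    · simp
    have newton : ∀ v : Fin m → R, (j : R) * aeval v (esymm (Fin m) ℤ j) = (-1) ^ (j + 1) *
        ∑ a ∈ Finset.HasAntidiagonal.antidiagonal j with a.1 < j,
          (-1) ^ a.1 * aeval v (esymm (Fin m) ℤ a.1) * ∑ i, v i ^ a.2 := by
      intro v
      have := congrArg (aeval v) (mul_esymm_eq_sum (Fin m) ℤ j)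
      simpa [psum, map_sum] using this
    refine (hunit j hpos hj).mul_left_cancel ?_
    rw [newton t, newton u]
    congr 1
    refine Finset.sum_congr rfl fun a ha => ?_
    rw [Finset.mem_filter, Finset.HasAntidiagonal.mem_antidiagonal] at ha
    rw [ih a.1 ha.2 (by omega), h a.2 (by omega) (by omega)]

lemma exists_psum_eq_aeval_esymm (m j : ℕ) : ∃ Φ : MvPolynomial (Fin m) ℤ,
    ∀ (R : Type) [CommRing R] (t : Fin m → R),
      ∑ i, t i ^ j = aeval (fun i : Fin m => aeval t (esymm (Fin m) ℤ (i + 1))) Φ := by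
  obtain ⟨Φ, hΦ⟩ := esymmAlgHom_fin_surjective (n := m) (m := m) ℤ le_rfl
    ⟨psum (Fin m) ℤ j, psum_isSymmetric _ _ _⟩
  refine ⟨Φ, fun R _ t => ?_⟩
  have h1 := congrArg (fun P : symmetricSubalgebra (Fin m) ℤ => aeval t (P : MvPolynomial (Fin m) ℤ))
    hΦ
  simp only [esymmAlgHom_apply] at h1
  rw [← AlgHom.comp_apply, comp_aeval] at h1
  rw [h1]
  simp [psum]

lemma add_pow_of_sq_eq_zero {R : Type*} [CommRing R] (a b : R) (hb : b * b = 0) (n : ℕ) :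
    (a + b) ^ n = a ^ n + n * a ^ (n - 1) * b := by
  induction n with
  | zero => simp
  | succ n ih =>
    rw [pow_succ, ih]
    rcases n with _ | n
    · simp
    · simp only [Nat.add_sub_cancel]
      push_cast
      linear_combination ((n : R) + 1) * a ^ n * hb

lemma card_le_pow_of_esymm_eq {m : ℕ} {F : Type} [Field F] [DecidableEq F]
    (T : Finset (Fin m → F)) (e : ℕ → F)
    (h : ∀ t ∈ T, ∀ j ≤ m, aeval t (esymm (Fin m) ℤ j) = e j) : T.card ≤ m ^ m := by
  classical
  rcases T.eq_empty_or_nonempty with rfl | ⟨t₀, ht₀⟩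
  · simp
  have hprod : ∀ t ∈ T, ∏ i, (Polynomial.X - Polynomial.C (t i)) =
      ∑ j ∈ Finset.range (m + 1), (-1) ^ j * (Polynomial.C (e j) * Polynomial.X ^ (m - j)) := by
    intro t ht
    have h1 := Multiset.prod_X_sub_X_eq_sum_esymm (Finset.univ.val.map t)
    rw [Multiset.map_map] at h1
    simp only [Multiset.card_map, Finset.card_val, Finset.card_univ, Fintype.card_fin] at h1
    refine Eq.trans ?_ (h1.trans ?_)
    · rfl
    · refine Finset.sum_congr rfl fun j hj => ?_
      rw [← aeval_esymm_eq_multiset_esymm (Fin m) ℤ, h t ht j (by simpa [Nat.lt_succ_iff] using hj)]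
  have hsub : T ⊆ Fintype.piFinset fun _ => Finset.univ.image t₀ := by
    intro t ht
    rw [Fintype.mem_piFinset]
    intro i
    have h1 := (hprod t ht).trans (hprod t₀ ht₀).symm
    have h2 := congrArg (Polynomial.eval (t i)) h1
    rw [Polynomial.eval_prod, Polynomial.eval_prod,
      Finset.prod_eq_zero (Finset.mem_univ i) (by simp)] at h2
    obtain ⟨l, -, hl⟩ := Finset.prod_eq_zero_iff.mp h2.symm
    simp only [Polynomial.eval_sub, Polynomial.eval_X, Polynomial.eval_C, sub_eq_zero] at hl
    exact Finset.mem_image.mpr ⟨l, Finset.mem_univ _, hl.symm⟩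
  refine (Finset.card_le_card hsub).trans ?_
  rw [Fintype.card_piFinset_const]
  have : (Finset.univ.image t₀).card ≤ m := by
    simpa using Finset.card_image_le (s := Finset.univ) (f := t₀)
  simpa using Nat.pow_le_pow_left this m

/-- The polynomial in the top elementary symmetric function that expresses `∑ (q tᵢ + w) ^ k`
once the lower elementary symmetric functions are fixed to be `e`. -/
noncomputable def fiberPoly {n : ℕ} {F : Type} [Field F] (Φ : ℕ → MvPolynomial (Fin (n + 1)) ℤ)
    (k : ℕ) (q w : F) (e : Fin (n + 1) → F) : Polynomial F :=
  ∑ j ∈ Finset.range (k + 1), Polynomial.C (q ^ j * w ^ (k - j) * (k.choose j : F)) *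
    aeval (fun i : Fin (n + 1) => if i = Fin.last n then Polynomial.X else Polynomial.C (e i)) (Φ j)

lemma aeval_fiberPoly {n : ℕ} {F : Type} [Field F] (Φ : ℕ → MvPolynomial (Fin (n + 1)) ℤ)
    (hΦ : ∀ (j : ℕ) (R : Type) [CommRing R] (t : Fin (n + 1) → R),
      ∑ i, t i ^ j = aeval (fun i : Fin (n + 1) => aeval t (esymm (Fin (n + 1)) ℤ (i + 1))) (Φ j))
    (k : ℕ) (q w : F) (e : Fin (n + 1) → F) {R : Type} [CommRing R] [Algebra F R]
    (x : Fin (n + 1) → R)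
    (hx : ∀ i : Fin (n + 1), i ≠ Fin.last n →
      aeval x (esymm (Fin (n + 1)) ℤ (i + 1)) = algebraMap F R (e i)) :
    ∑ i, (algebraMap F R q * x i + algebraMap F R w) ^ k =
      Polynomial.aeval (aeval x (esymm (Fin (n + 1)) ℤ (n + 1))) (fiberPoly Φ k q w e) := by
  set E := aeval x (esymm (Fin (n + 1)) ℤ (n + 1)) with hE
  have h1 : ∀ j, Polynomial.aeval E (aeval (fun i : Fin (n + 1) =>
      if i = Fin.last n then Polynomial.X else Polynomial.C (e i)) (Φ j)) = ∑ i, x i ^ j := by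
    intro j
    have h2 := comp_aeval_apply (R := ℤ) (fun i : Fin (n + 1) =>
      if i = Fin.last n then Polynomial.X else Polynomial.C (e i))
      ((Polynomial.aeval E : Polynomial F →ₐ[F] R) : Polynomial F →+* R).toIntAlgHom (Φ j)
    rw [hΦ j R x]
    refine h2.trans ?_
    congr 2
    ext i
    by_cases hi : i = Fin.last n
    · subst hi
      simp [hE]
    · simp [hi, hx i hi]
  simp_rw [add_pow, mul_pow]
  rw [fiberPoly, map_sum, Finset.sum_comm]
  refine Finset.sum_congr rfl fun j _ => ?_
  rw [map_mul, h1, Polynomial.aeval_C, Finset.mul_sum]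
  refine Finset.sum_congr rfl fun i _ => ?_
  simp only [map_mul, map_pow, map_natCast]
  ring

lemma natDegree_fiberPoly_le {n : ℕ} {F : Type} [Field F] (Φ : ℕ → MvPolynomial (Fin (n + 1)) ℤ)
    (k : ℕ) (q w : F) (e : Fin (n + 1) → F) :
    (fiberPoly Φ k q w e).natDegree ≤ ∑ j ∈ Finset.range (k + 1), (Φ j).totalDegree := by
  refine Polynomial.natDegree_sum_le_of_forall_le _ _ fun j hj => ?_
  refine (Polynomial.natDegree_C_mul_le _ _).trans ?_
  refine le_trans ?_ (Finset.single_le_sum (f := fun j => (Φ j).totalDegree)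
    (fun _ _ => Nat.zero_le _) hj)
  rw [← aeval_map_algebraMap F]
  refine (aeval_natDegree_le (n := 1) _ (Finset.sup_mono (support_map_subset _ _)) _ fun i => ?_).trans
    (mul_one _).le
  split_ifs
  · exact Polynomial.natDegree_X_le
  · simp

lemma algebraMap_mul_eq_zero_of_fiberPoly_eq_C {n : ℕ} {F : Type} [Field F]
    (Φ : ℕ → MvPolynomial (Fin (n + 1)) ℤ)
    (hΦ : ∀ (j : ℕ) (R : Type) [CommRing R] (t : Fin (n + 1) → R),
      ∑ i, t i ^ j = aeval (fun i : Fin (n + 1) => aeval t (esymm (Fin (n + 1)) ℤ (i + 1))) (Φ j))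
    (k : ℕ) (q w d : F) (t ξ : Fin (n + 1) → F)
    (hunit : ∀ j : ℕ, 1 ≤ j → j ≤ n → IsUnit (j : F))
    (hξ : ∀ l < n, ∑ i, ξ i * t i ^ l = 0)
    (hzero : fiberPoly Φ k q w (fun i => aeval t (esymm (Fin (n + 1)) ℤ (i + 1))) = Polynomial.C d)
    (R : Type) [CommRing R] [Algebra F R] (ε : R) (hε : ε * ε = 0)
    (hd : ∑ i, (q * t i + w) ^ k = d) :
    algebraMap F R ((k : F) * q * ∑ i, ξ i * (q * t i + w) ^ (k - 1)) * ε = 0 := by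
  set x : Fin (n + 1) → R := fun i => algebraMap F R (t i) + algebraMap F R (ξ i) * ε with hx
  have hnil : ∀ y : R, y * ε * (y * ε) = 0 := fun y => by
    linear_combination y ^ 2 * hε
  have hxpow : ∀ j : ℕ, 1 ≤ j → j ≤ n → ∑ i, x i ^ j = ∑ i, (algebraMap F R (t i)) ^ j := by
    intro j h1 h2
    simp_rw [hx, add_pow_of_sq_eq_zero _ _ (hnil _)]
    rw [Finset.sum_add_distrib, add_eq_left]
    have h3 := congrArg (algebraMap F R) (hξ (j - 1) (by omega))
    rw [map_sum, map_zero] at h3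
    calc _ = (j : R) * ε * ∑ i, algebraMap F R (ξ i * t i ^ (j - 1)) := by
          rw [Finset.mul_sum]
          refine Finset.sum_congr rfl fun i _ => ?_
          rw [map_mul, map_pow]
          ring
      _ = 0 := by rw [h3, mul_zero]
  have hxe : ∀ i : Fin (n + 1), i ≠ Fin.last n → aeval x (esymm (Fin (n + 1)) ℤ (i + 1)) =
      algebraMap F R (aeval t (esymm (Fin (n + 1)) ℤ (i + 1))) := by
    intro i hi
    rw [esymm_eq_of_psum_eq x (fun i => algebraMap F R (t i)) n
      (fun j h1 h2 => by simpa using (hunit j h1 h2).map (algebraMap F R))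
      hxpow _ (by simpa using Fin.val_lt_last hi)]
    exact (comp_aeval_apply (R := ℤ) t (algebraMap F R).toIntAlgHom _).symm
  have h1 := aeval_fiberPoly Φ hΦ k q w _ x hxe
  rw [hzero, Polynomial.aeval_C] at h1
  have h2 : ∀ i, algebraMap F R q * x i + algebraMap F R w =
      algebraMap F R (q * t i + w) + algebraMap F R (q * ξ i) * ε := by
    intro i
    simp only [hx, map_add, map_mul]
    ring
  simp_rw [h2, add_pow_of_sq_eq_zero _ _ (hnil _)] at h1
  rw [Finset.sum_add_distrib, ← hd, map_sum] at h1
  simp_rw [map_pow, add_eq_left] at h1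
  rw [← h1, Finset.mul_sum, map_sum, Finset.sum_mul]
  refine Finset.sum_congr rfl fun i _ => ?_
  simp only [map_mul, map_pow, map_natCast]
  ring

/-- The number of nonsingular solutions of the system `∑ tᵢ ^ j = c j` for `1 ≤ j ≤ n`,
`∑ (q tᵢ + w) ^ k = d` in `n + 1` unknowns is bounded independently of the field. -/
lemma exists_card_nonsingular_le (n k : ℕ) : ∃ C₀ : ℕ, ∀ (F : Type) [Field F] [DecidableEq F]
    (q w d : F) (c : ℕ → F) (T : Finset (Fin (n + 1) → F)),
    (∀ j : ℕ, 1 ≤ j → j ≤ n → (j : F) ≠ 0) → (k : F) ≠ 0 → q ≠ 0 →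
    (∀ t ∈ T, ∀ j : ℕ, 1 ≤ j → j ≤ n → ∑ i, t i ^ j = c j) →
    (∀ t ∈ T, ∑ i, (q * t i + w) ^ k = d) →
    (∀ t ∈ T, ∀ ξ : Fin (n + 1) → F, (∀ l < n, ∑ i, ξ i * t i ^ l = 0) →
      ∑ i, ξ i * (q * t i + w) ^ (k - 1) = 0 → ξ = 0) →
    T.card ≤ C₀ := by
  choose Φ hΦ using exists_psum_eq_aeval_esymm (n + 1)
  refine ⟨(n + 1) ^ (n + 1) * ∑ j ∈ Finset.range (k + 1), (Φ j).totalDegree,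
    fun F _ _ q w d c T hj hk hq hpow hlast hns => ?_⟩
  classical
  rcases T.eq_empty_or_nonempty with rfl | ⟨t₀, ht₀⟩
  · simp
  have hunit : ∀ j : ℕ, 1 ≤ j → j ≤ n → IsUnit (j : F) := fun j h1 h2 => (hj j h1 h2).isUnit
  set e : Fin (n + 1) → F := fun i => aeval t₀ (esymm (Fin (n + 1)) ℤ (i + 1)) with he
  have hesymm : ∀ t ∈ T, ∀ j ≤ n,
      aeval t (esymm (Fin (n + 1)) ℤ j) = aeval t₀ (esymm (Fin (n + 1)) ℤ j) := fun t ht =>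
    esymm_eq_of_psum_eq t t₀ n hunit fun j h1 h2 => by rw [hpow t ht j h1 h2, hpow t₀ ht₀ j h1 h2]
  have hlt : ∀ i : Fin (n + 1), i ≠ Fin.last n → (i : ℕ) + 1 ≤ n := fun i hi => by
    have := Fin.val_lt_last hi
    simpa using this
  have hroot : ∀ t ∈ T, (fiberPoly Φ k q w e - Polynomial.C d).eval
      (aeval t (esymm (Fin (n + 1)) ℤ (n + 1))) = 0 := by
    intro t ht
    have h1 := aeval_fiberPoly Φ hΦ k q w e (R := F) t fun i hi => by
      rw [hesymm t ht _ (hlt i hi)]; rfl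
    simp only [Algebra.algebraMap_self, RingHom.id_apply] at h1
    rw [hlast t ht, Polynomial.coe_aeval_eq_eval] at h1
    rw [Polynomial.eval_sub, Polynomial.eval_C, ← h1, sub_self]
  have hne : fiberPoly Φ k q w e - Polynomial.C d ≠ 0 := by
    intro hzero
    rw [sub_eq_zero] at hzero
    obtain ⟨ξ, hξ, hξ0⟩ : ∃ ξ : Fin (n + 1) → F,
        (∀ l < n, ∑ i, ξ i * t₀ i ^ l = 0) ∧ ξ ≠ 0 := by
      set M : Matrix (Fin n) (Fin (n + 1)) F := Matrix.of fun l i => t₀ i ^ (l : ℕ) with hM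
      have hker : LinearMap.ker M.mulVecLin ≠ ⊥ :=
        M.mulVecLin.ker_ne_bot_of_finrank_lt (by simp)
      obtain ⟨ξ, hmem, h0⟩ := (Submodule.ne_bot_iff _).mp hker
      refine ⟨ξ, fun l hl => ?_, h0⟩
      have := congrFun (LinearMap.mem_ker.mp hmem) ⟨l, hl⟩
      simpa [Matrix.mulVec, dotProduct, hM, mul_comm] using this
    have h4 : (k : F) * q * ∑ i, ξ i * (q * t₀ i + w) ^ (k - 1) = 0 := by
      have h3 := algebraMap_mul_eq_zero_of_fiberPoly_eq_C Φ hΦ k q w d t₀ ξ hunit hξ hzero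
        (DualNumber F) DualNumber.eps DualNumber.eps_mul_eps (hlast t₀ ht₀)
      rw [← Algebra.smul_def] at h3
      simpa using congrArg TrivSqZeroExt.snd h3
    have h5 : ∑ i, ξ i * (q * t₀ i + w) ^ (k - 1) = 0 :=
      (mul_eq_zero.mp h4).resolve_left (mul_ne_zero hk hq)
    exact hξ0 (hns t₀ ht₀ ξ hξ h5)
  set I := T.image fun t => aeval t (esymm (Fin (n + 1)) ℤ (n + 1)) with hI
  have hcard : T.card ≤ (n + 1) ^ (n + 1) * I.card := by
    refine Finset.card_le_mul_card_image T _ fun E _ => ?_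
    refine card_le_pow_of_esymm_eq _
      (fun j => if j ≤ n then aeval t₀ (esymm (Fin (n + 1)) ℤ j) else E) fun t ht j hj => ?_
    rw [Finset.mem_filter] at ht
    split_ifs with h
    · exact hesymm t ht.1 j h
    · obtain rfl : j = n + 1 := by omega
      exact ht.2
  refine hcard.trans (Nat.mul_le_mul_left _ ?_)
  have hIroots : I ⊆ (fiberPoly Φ k q w e - Polynomial.C d).roots.toFinset := by
    intro E hE
    obtain ⟨t, ht, rfl⟩ := Finset.mem_image.mp hE
    rw [Multiset.mem_toFinset, Polynomial.mem_roots hne]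
    exact hroot t ht
  calc I.card ≤ _ := Finset.card_le_card hIroots
    _ ≤ _ := Multiset.toFinset_card_le _
    _ ≤ _ := Polynomial.card_roots' _
    _ ≤ _ := by
      rw [Polynomial.natDegree_sub_C]
      exact natDegree_fiberPoly_le Φ k q w e

end NonsingularCount

section Determinant

lemma signVariations_add_one_le_card_support {R : Type*} [Ring R] [LinearOrder R]
    [IsStrictOrderedRing R] (P : Polynomial R) (hP : P ≠ 0) :
    P.signVariations + 1 ≤ P.support.card := by
  induction hn : P.support.card using Nat.strong_induction_on generalizing P with
  | _ n ih =>
    by_cases h0 : P.eraseLead = 0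
    · have h1 : P = Polynomial.monomial P.natDegree P.leadingCoeff := by
        simpa [h0] using P.eraseLead_add_monomial_natDegree_leadingCoeff.symm
      have h2 : P.signVariations = 0 := by
        rw [h1]
        exact Polynomial.signVariations_monomial _ _
      have h3 : 0 < P.support.card := by simpa [Finset.card_pos] using hP
      omega
    · have hlt := Polynomial.eraseLead_support_card_lt (f := P) hP
      have := ih _ (hn ▸ hlt) P.eraseLead h0 rfl
      have h2 := Polynomial.signVariations_le_eraseLead_succ P
      omega

/-- A generalised Vandermonde determinant at distinct positive points does not vanish. -/
lemma det_pow_ne_zero {m : ℕ} (e : Fin m → ℕ) (he : Function.Injective e) (z : Fin m → ℤ)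
    (hz : Function.Injective z) (hpos : ∀ i, 0 < z i) :
    (Matrix.of fun j i => z i ^ e j : Matrix (Fin m) (Fin m) ℤ).det ≠ 0 := by
  intro hdet
  obtain ⟨v, hv0, hv⟩ := Matrix.exists_vecMul_eq_zero_iff.mpr hdet
  set P : Polynomial ℤ := ∑ j, Polynomial.monomial (e j) (v j) with hP
  have hcoeff : ∀ j, P.coeff (e j) = v j := by
    intro j
    rw [hP, Polynomial.finsetSum_coeff, Finset.sum_eq_single j]
    · simp
    · intro l _ hl
      rw [Polynomial.coeff_monomial, if_neg (he.ne hl)]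
    · simp
  have hP0 : P ≠ 0 := by
    intro h0
    refine hv0 (funext fun j => ?_)
    rw [← hcoeff j, h0, Polynomial.coeff_zero, Pi.zero_apply]
  have hroot : ∀ i, P.eval (z i) = 0 := by
    intro i
    have := congrFun hv i
    simpa [Matrix.vecMul, dotProduct, hP, Polynomial.eval_finsetSum] using this
  have hsupp : P.support.card ≤ m := by
    have h1 : P.support ⊆ Finset.univ.image e := by
      intro l hl
      by_contra hne
      refine Polynomial.mem_support_iff.mp hl ?_
      rw [hP, Polynomial.finsetSum_coeff]
      refine Finset.sum_eq_zero fun j _ => ?_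
      rw [Polynomial.coeff_monomial, if_neg]
      rintro rfl
      exact hne (Finset.mem_image_of_mem e (Finset.mem_univ j))
    simpa using (Finset.card_le_card h1).trans Finset.card_image_le
  have hcount : m ≤ P.roots.countP (0 < ·) := by
    have h1 : (Finset.univ.image z).val ≤ P.roots.filter (0 < ·) := by
      rw [Multiset.le_iff_subset (Finset.nodup _)]
      intro t ht
      obtain ⟨i, -, rfl⟩ := Finset.mem_image.mp (Finset.mem_val.mp ht)
      rw [Multiset.mem_filter]
      exact ⟨(Polynomial.mem_roots hP0).mpr (hroot i), hpos i⟩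
    have h2 := Multiset.card_le_card h1
    rw [Finset.card_val, Finset.card_image_of_injective _ hz, Finset.card_univ,
      Fintype.card_fin] at h2
    rwa [Multiset.countP_eq_card_filter]
  have h3 := Polynomial.roots_countP_pos_le_signVariations (P := P)
  have h4 := signVariations_add_one_le_card_support P hP0
  omega

lemma abs_det_pow_le {m : ℕ} (e : Fin m → ℕ) (z : Fin m → ℤ) (B : ℤ) (hB : 1 ≤ B) (K : ℕ)
    (he : ∀ j, e j ≤ K) (hz : ∀ i, |z i| ≤ B) :
    |(Matrix.of fun j i => z i ^ e j : Matrix (Fin m) (Fin m) ℤ).det| ≤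
      m.factorial * B ^ (K * m) := by
  have := Matrix.det_le (A := (Matrix.of fun j i => z i ^ e j : Matrix (Fin m) (Fin m) ℤ))
    (abv := AbsoluteValue.abs) (x := B ^ K) fun j i => by
      simp only [Matrix.of_apply, AbsoluteValue.abs_apply, abs_pow]
      exact (pow_le_pow_left₀ (abs_nonneg _) (hz i) _).trans (pow_le_pow_right₀ hB (he j))
  simpa [pow_mul, nsmul_eq_mul] using this

lemma prime_dvd_of_mulVec_dvd {m : ℕ} {p : ℤ} (hp : Prime p) (M : Matrix (Fin m) (Fin m) ℤ)
    (hdet : ¬ p ∣ M.det) (δ : Fin m → ℤ) (h : ∀ j, p ∣ (M.mulVec δ) j) (i : Fin m) : p ∣ δ i := by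
  have h1 : (M.adjugate.mulVec (M.mulVec δ)) i = M.det * δ i := by
    rw [Matrix.mulVec_mulVec, Matrix.adjugate_mul, Matrix.smul_mulVec, Matrix.one_mulVec]
    simp
  refine (hp.dvd_or_dvd (a := M.det) (b := δ i) ?_).resolve_left hdet
  rw [← h1]
  rw [Matrix.mulVec, dotProduct]
  exact Finset.dvd_sum fun j _ => (h j).mul_left _

end Determinant

section Hensel

/-- Uniqueness of Hensel lifts for systems of additive equations. -/
lemma modEq_pow_of_kernel {m : ℕ} {p : ℤ} (N : ℕ) (g : Fin m → Polynomial ℤ)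
    (x y : Fin m → ℤ) (hxy : ∀ i, p ∣ x i - y i)
    (hg : ∀ j, p ^ N ∣ ∑ i, (g j).eval (x i) - ∑ i, (g j).eval (y i))
    (hp : p ≠ 0)
    (hker : ∀ δ : Fin m → ℤ, (∀ j, p ∣ ∑ i, δ i * (g j).derivative.eval (y i)) → ∀ i, p ∣ δ i) :
    ∀ i, p ^ N ∣ x i - y i := by
  suffices h : ∀ t, 1 ≤ t → t ≤ N → ∀ i, p ^ t ∣ x i - y i by
    rcases Nat.eq_zero_or_pos N with rfl | hN
    · simp
    · exact h N hN le_rfl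
  intro t ht
  induction t, ht using Nat.le_induction with
  | base => intro _; simpa using hxy
  | succ t ht ih =>
    intro htN
    choose δ hδ using ih (by omega)
    have hx : ∀ i, x i = y i + p ^ t * δ i := fun i => by linear_combination hδ i
    suffices h : ∀ i, p ∣ δ i by
      intro i
      rw [hδ i, pow_succ]
      exact mul_dvd_mul_left _ (h i)
    refine hker δ fun j => ?_
    have h1 : p ^ (t + 1) ∣ p ^ t * ∑ i, δ i * (g j).derivative.eval (y i) := by
      have h2 : ∀ i, ∃ c, (g j).eval (x i) - (g j).eval (y i) =
          p ^ t * (δ i * (g j).derivative.eval (y i)) + p ^ (t + 1) * c := by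
        intro i
        obtain ⟨c, hc⟩ := (g j).binomExpansion (y i) (p ^ t * δ i)
        refine ⟨c * δ i ^ 2 * p ^ (t - 1), ?_⟩
        rw [hx i, hc]
        have : p ^ t * p ^ t = p ^ (t + 1) * p ^ (t - 1) := by
          rw [← pow_add, ← pow_add]
          congr 1
          omega
        linear_combination c * δ i ^ 2 * this
      choose c hc using h2
      have h3 : p ^ t * ∑ i, δ i * (g j).derivative.eval (y i) =
          (∑ i, (g j).eval (x i) - ∑ i, (g j).eval (y i)) - p ^ (t + 1) * ∑ i, c i := by
        rw [← Finset.sum_sub_distrib, Finset.sum_congr rfl fun i _ => hc i,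
          Finset.sum_add_distrib, Finset.mul_sum, Finset.mul_sum]
        ring
      rw [h3]
      exact dvd_sub ((pow_dvd_pow p htN).trans (hg j)) (dvd_mul_right _ _)
    rw [pow_succ] at h1
    exact (mul_dvd_mul_iff_left (pow_ne_zero t hp)).mp h1

end Hensel

section LocalSystem

/-- The exponents `0, 1, …, n - 1, k - 1`. -/
def jacExp (n k : ℕ) (j : Fin (n + 1)) : ℕ := if j = Fin.last n then k - 1 else j

/-- The generalised Vandermonde matrix with rows `z ^ 0, …, z ^ (n - 1), z ^ (k - 1)`. -/
def jacMatrix (n k : ℕ) (z : Fin (n + 1) → ℤ) : Matrix (Fin (n + 1)) (Fin (n + 1)) ℤ :=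
  Matrix.of fun j i => z i ^ jacExp n k j

lemma jacExp_injective {n k : ℕ} (hk : n + 1 ≤ k) : Function.Injective (jacExp n k) := by
  intro i j h
  unfold jacExp at h
  have hi := Fin.val_lt_last (i := i)
  have hj := Fin.val_lt_last (i := j)
  split_ifs at h with h1 h2 h2
  · rw [h1, h2]
  · have := hj h2
    omega
  · have := hi h1
    omega
  · exact Fin.ext h

lemma jacExp_le {n k : ℕ} (hk : n + 1 ≤ k) (j : Fin (n + 1)) : jacExp n k j ≤ k - 1 := by
  unfold jacExp
  split_ifs
  · exact le_rfl
  · omega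

/-- The system `t, t ^ 2, …, t ^ n` together with `(q t + w) ^ k` truncated to its terms of degree
larger than `n`. -/
noncomputable def localSys (n k : ℕ) (q w : ℤ) (j : Fin (n + 1)) : Polynomial ℤ :=
  if j = Fin.last n then
    (Polynomial.C q * Polynomial.X + Polynomial.C w) ^ k - ∑ l ∈ Finset.range (n + 1),
      Polynomial.C ((k.choose l : ℤ) * q ^ l * w ^ (k - l)) * Polynomial.X ^ l
  else Polynomial.X ^ ((j : ℕ) + 1)

lemma eval_localSys_last (n k : ℕ) (q w t : ℤ) : (localSys n k q w (Fin.last n)).eval t =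
    (q * t + w) ^ k - ∑ l ∈ Finset.range (n + 1), (k.choose l : ℤ) * q ^ l * w ^ (k - l) * t ^ l := by
  simp [localSys, Polynomial.eval_finsetSum]

lemma eval_localSys_of_ne (n k : ℕ) (q w t : ℤ) {j : Fin (n + 1)} (hj : j ≠ Fin.last n) :
    (localSys n k q w j).eval t = t ^ ((j : ℕ) + 1) := by
  simp [localSys, hj]

lemma sum_eval_localSys_last {α : Type*} (A : Finset α) (n k : ℕ) (q w : ℤ) (t : α → ℤ) :
    ∑ i ∈ A, (localSys n k q w (Fin.last n)).eval (t i) =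
    ∑ i ∈ A, (q * t i + w) ^ k -
      ∑ l ∈ Finset.range (n + 1), (k.choose l : ℤ) * q ^ l * w ^ (k - l) * ∑ i ∈ A, t i ^ l := by
  simp_rw [eval_localSys_last, Finset.sum_sub_distrib, Finset.mul_sum]
  rw [Finset.sum_comm]

lemma pow_dvd_eval_localSys {n k : ℕ} (q w : ℤ) {p t : ℤ} (ht : p ∣ t) (j : Fin (n + 1)) :
    p ^ ((j : ℕ) + 1) ∣ (localSys n k q w j).eval t := by
  by_cases hj : j = Fin.last n
  · subst hj
    have h1 : (q * t + w) ^ k = ∑ l ∈ Finset.range (n + 1),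
        (k.choose l : ℤ) * q ^ l * w ^ (k - l) * t ^ l +
        ∑ l ∈ Finset.Ico (n + 1) (n + 1 + k), (k.choose l : ℤ) * q ^ l * w ^ (k - l) * t ^ l := by
      rw [Finset.sum_range_add_sum_Ico _ (by omega), add_pow]
      have h2 : Finset.range (k + 1) ⊆ Finset.range (n + 1 + k) := by
        intro l
        simp only [Finset.mem_range]
        omega
      rw [← Finset.sum_subset h2 fun l _ hl => by
        rw [Nat.choose_eq_zero_of_lt (by simpa using hl)]
        simp]
      refine Finset.sum_congr rfl fun l _ => ?_
      rw [mul_pow]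
      ring
    rw [eval_localSys_last, h1, add_sub_cancel_left]
    refine Finset.dvd_sum fun l hl => ?_
    rw [Finset.mem_Ico] at hl
    exact ((pow_dvd_pow_of_dvd ht _).trans (pow_dvd_pow t (by simpa using hl.1))).mul_left _
  · rw [eval_localSys_of_ne _ _ _ _ _ hj]
    exact pow_dvd_pow_of_dvd ht _

lemma dvd_of_jacobian_kernel {n k : ℕ} {p : ℤ} (hp : Prime p) (q w : ℤ)
    (t : Fin (n + 1) → ℤ) (hdet : ¬ p ∣ (jacMatrix n k fun i => q * t i + w).det)
    (δ : Fin (n + 1) → ℤ) (h : ∀ l < n, p ∣ ∑ i, δ i * t i ^ l)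
    (hlast : p ∣ ∑ i, δ i * (q * t i + w) ^ (k - 1)) (i : Fin (n + 1)) : p ∣ δ i := by
  refine prime_dvd_of_mulVec_dvd hp _ hdet δ (fun j => ?_) i
  have h1 : (jacMatrix n k fun i => q * t i + w).mulVec δ j =
      ∑ i, δ i * (q * t i + w) ^ jacExp n k j := by
    simp [Matrix.mulVec, dotProduct, jacMatrix, mul_comm]
  rw [h1]
  unfold jacExp
  split_ifs with hj
  · exact hlast
  · simp_rw [add_pow, mul_pow, Finset.mul_sum]
    rw [Finset.sum_comm]
    refine Finset.dvd_sum fun l hl => ?_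
    have hl' : l < n := by
      have := Fin.val_lt_last hj
      simp only [Finset.mem_range] at this hl
      omega
    have h2 : ∑ i, δ i * (q ^ l * t i ^ l * w ^ ((j : ℕ) - l) * ((j : ℕ).choose l : ℤ)) =
        q ^ l * w ^ ((j : ℕ) - l) * ((j : ℕ).choose l : ℤ) * ∑ i, δ i * t i ^ l := by
      rw [Finset.mul_sum]
      exact Finset.sum_congr rfl fun i _ => by ring
    rw [h2]
    exact (h l hl').mul_left _

lemma dvd_of_localSys_kernel {n k : ℕ} {p : ℕ} (hp : p.Prime) (hpk : k < p) (hk : n + 1 ≤ k)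
    {q w : ℤ} (hq : ¬ (p : ℤ) ∣ q)
    (t : Fin (n + 1) → ℤ) (hdet : ¬ (p : ℤ) ∣ (jacMatrix n k fun i => q * t i + w).det)
    (δ : Fin (n + 1) → ℤ)
    (h : ∀ j, (p : ℤ) ∣ ∑ i, δ i * (localSys n k q w j).derivative.eval (t i)) (i : Fin (n + 1)) :
    (p : ℤ) ∣ δ i := by
  have hp' := Nat.prime_iff_prime_int.mp hp
  have hsmall : ∀ j : ℕ, 0 < j → j < p → ¬ (p : ℤ) ∣ (j : ℤ) := fun j h0 h1 h2 =>
    absurd (Nat.le_of_dvd h0 (Int.natCast_dvd_natCast.mp h2)) (by omega)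
  have hlow : ∀ l < n, (p : ℤ) ∣ ∑ i, δ i * t i ^ l := by
    intro l hl
    have h1 := h ⟨l, by omega⟩
    have hne : (⟨l, by omega⟩ : Fin (n + 1)) ≠ Fin.last n := by
      intro he
      have := congrArg Fin.val he
      simp at this
      omega
    have h2 : ∑ i, δ i * (localSys n k q w ⟨l, by omega⟩).derivative.eval (t i) =
        ((l + 1 : ℕ) : ℤ) * ∑ i, δ i * t i ^ l := by
      rw [Finset.mul_sum]
      refine Finset.sum_congr rfl fun i _ => ?_
      simp only [localSys, if_neg hne, Polynomial.derivative_X_pow, Polynomial.eval_mul,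
        Polynomial.eval_pow, Polynomial.eval_X, Nat.add_sub_cancel,
        map_natCast, Polynomial.eval_natCast]
      ring
    rw [h2] at h1
    exact (hp'.dvd_or_dvd h1).resolve_left (hsmall _ (by omega) (by omega))
  refine dvd_of_jacobian_kernel hp' q w t hdet δ hlow ?_ i
  have h1 := h (Fin.last n)
  have h2 : ∑ i, δ i * (localSys n k q w (Fin.last n)).derivative.eval (t i) =
      (k : ℤ) * q * ∑ i, δ i * (q * t i + w) ^ (k - 1) -
      ∑ l ∈ Finset.range (n + 1), (k.choose l : ℤ) * q ^ l * w ^ (k - l) * l *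
        ∑ i, δ i * t i ^ (l - 1) := by
    simp only [Finset.mul_sum]
    rw [Finset.sum_comm, ← Finset.sum_sub_distrib]
    refine Finset.sum_congr rfl fun i _ => ?_
    simp [localSys, Polynomial.eval_finsetSum, Polynomial.derivative_pow, mul_sub, Finset.mul_sum]
    congr 1
    · ring
    · exact Finset.sum_congr rfl fun l _ => by ring
  rw [h2] at h1
  have h3 : (p : ℤ) ∣ ∑ l ∈ Finset.range (n + 1), (k.choose l : ℤ) * q ^ l * w ^ (k - l) * l *
        ∑ i, δ i * t i ^ (l - 1) := by
    refine Finset.dvd_sum fun l hl => ?_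
    rcases Nat.eq_zero_or_pos l with rfl | hpos
    · simp
    · rw [Finset.mem_range] at hl
      exact (hlow (l - 1) (by omega)).mul_left _
  have h4 := (dvd_sub_left h3).mp h1
  exact (hp'.dvd_or_dvd h4).resolve_left fun h5 =>
    (hp'.dvd_or_dvd h5).elim (hsmall k (by omega) hpk) hq

/-- Solutions of the local system that are nonsingular modulo `p` and prescribed modulo
`p, p ^ 2, …, p ^ (n + 1)` are few. -/
lemma exists_card_localSys_le (n k : ℕ) (hk : n + 1 ≤ k) : ∃ C₀ : ℕ, ∀ (p : ℕ), p.Prime → k < p →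
    ∀ (q w : ℤ), ¬ (p : ℤ) ∣ q → ∀ (c : Fin (n + 1) → ℤ) (S : Finset (Fin (n + 1) → ℤ)),
    (∀ t ∈ S, ∀ u ∈ S, (∀ i, (p : ℤ) ^ (n + 2) ∣ t i - u i) → t = u) →
    (∀ t ∈ S, ¬ (p : ℤ) ∣ (jacMatrix n k fun i => q * t i + w).det) →
    (∀ t ∈ S, ∀ j : Fin (n + 1), (p : ℤ) ^ ((j : ℕ) + 1) ∣ ∑ i, (localSys n k q w j).eval (t i) - c j) →
    S.card ≤ C₀ * p ^ ((n + 1) * (n + 2) / 2) := by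
  obtain ⟨C₀, hC₀⟩ := exists_card_nonsingular_le n k
  refine ⟨C₀, fun p hp hpk q w hq c S hS hdet hc => ?_⟩
  have := Fact.mk hp
  have hp0 : (p : ℤ) ≠ 0 := by exact_mod_cast hp.ne_zero
  have hppos : (0 : ℤ) < p := by exact_mod_cast hp.pos
  set G : Fin (n + 1) → (Fin (n + 1) → ℤ) → ℤ := fun j t => ∑ i, (localSys n k q w j).eval (t i)
    with hG
  set ρ : (Fin (n + 1) → ℤ) → Fin (n + 1) → ℤ := fun t j =>
    ((G j t - c j) / (p : ℤ) ^ ((j : ℕ) + 1)) % (p : ℤ) ^ (n + 1 - j) with hρ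
  have hcong : ∀ t ∈ S, ∀ u ∈ S, ρ t = ρ u → ∀ j, (p : ℤ) ^ (n + 2) ∣ G j t - G j u := by
    intro t ht u hu h j
    have h1 : (p : ℤ) ^ (n + 1 - j) ∣ (G j t - c j) / (p : ℤ) ^ ((j : ℕ) + 1) -
        (G j u - c j) / (p : ℤ) ^ ((j : ℕ) + 1) :=
      Int.ModEq.dvd (congrFun h j).symm
    obtain ⟨α, hα⟩ := hc t ht j
    obtain ⟨β, hβ⟩ := hc u hu j
    have hα' : G j t - c j = (p : ℤ) ^ ((j : ℕ) + 1) * α := hα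
    have hβ' : G j u - c j = (p : ℤ) ^ ((j : ℕ) + 1) * β := hβ
    rw [hα', hβ', Int.mul_ediv_cancel_left _ (pow_ne_zero _ hp0),
      Int.mul_ediv_cancel_left _ (pow_ne_zero _ hp0)] at h1
    have h2 : G j t - G j u = (p : ℤ) ^ ((j : ℕ) + 1) * (α - β) := by
      linear_combination hα' - hβ'
    have h3 : (p : ℤ) ^ (n + 2) = (p : ℤ) ^ ((j : ℕ) + 1) * (p : ℤ) ^ (n + 1 - j) := by
      rw [← pow_add]
      congr 1
      omega
    rw [h2, h3]
    exact mul_dvd_mul_left _ h1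
  have himage : (S.image ρ).card ≤ p ^ ((n + 1) * (n + 2) / 2) := by
    have h1 : S.image ρ ⊆ Fintype.piFinset fun j : Fin (n + 1) =>
        Finset.Ico (0 : ℤ) ((p : ℤ) ^ (n + 1 - j)) := by
      intro v hv
      obtain ⟨t, -, rfl⟩ := Finset.mem_image.mp hv
      rw [Fintype.mem_piFinset]
      intro j
      rw [Finset.mem_Ico]
      exact ⟨Int.emod_nonneg _ (pow_ne_zero _ hp0), Int.emod_lt_of_pos _ (pow_pos hppos _)⟩
    refine (Finset.card_le_card h1).trans (le_of_eq ?_)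
    rw [Fintype.card_piFinset]
    have h2 : ∀ j : Fin (n + 1), (Finset.Ico (0 : ℤ) ((p : ℤ) ^ (n + 1 - j))).card =
        p ^ (n + 1 - (j : ℕ)) := by
      intro j
      rw [Int.card_Ico, sub_zero, ← Nat.cast_pow, Int.toNat_natCast]
    simp_rw [h2]
    rw [Fin.prod_univ_eq_prod_range (fun j => p ^ (n + 1 - j)) (n + 1),
      Finset.prod_pow_eq_pow_sum]
    congr 1
    have h3 := Finset.sum_range_reflect (fun j => j + 1) (n + 1)
    have h4 : ∑ j ∈ Finset.range (n + 1), (n + 1 - j) =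
        ∑ j ∈ Finset.range (n + 1), (n + 1 - 1 - j + 1) :=
      Finset.sum_congr rfl fun j hj => by
        rw [Finset.mem_range] at hj
        omega
    have h5 := Finset.sum_range_succ' (fun j => j) (n + 1)
    rw [h4, h3, ← Nat.add_zero (∑ j ∈ _, _), ← h5, Finset.sum_range_id]
    simp [mul_comm]
  have hfib : ∀ v ∈ S.image ρ, (S.filter fun t => ρ t = v).card ≤ C₀ := by
    intro v hv
    obtain ⟨t₀, ht₀, rfl⟩ := Finset.mem_image.mp hv
    set red : (Fin (n + 1) → ℤ) → Fin (n + 1) → ZMod p := fun t i => (t i : ZMod p) with hred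
    have hinj : Set.InjOn red (S.filter fun t => ρ t = ρ t₀) := by
      intro t ht u hu h
      rw [Finset.mem_coe, Finset.mem_filter] at ht hu
      refine hS t ht.1 u hu.1 (modEq_pow_of_kernel (n + 2) (localSys n k q w) t u (fun i => ?_)
        (hcong t ht.1 u hu.1 (ht.2.trans hu.2.symm)) hp0
        fun δ hδ => dvd_of_localSys_kernel hp hpk hk hq u (hdet u hu.1) δ hδ)
      rw [← ZMod.intCast_zmod_eq_zero_iff_dvd, Int.cast_sub, sub_eq_zero]
      exact congrFun h i
    rw [← Finset.card_image_of_injOn hinj]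
    have hmodp : ∀ t ∈ S, ρ t = ρ t₀ → ∀ j, (G j t : ZMod p) = G j t₀ := by
      intro t ht h j
      rw [← sub_eq_zero, ← Int.cast_sub, ZMod.intCast_zmod_eq_zero_iff_dvd]
      exact (dvd_pow_self _ (by omega)).trans (hcong t ht t₀ ht₀ h j)
    have hpsum : ∀ t ∈ S, ρ t = ρ t₀ → ∀ j : ℕ, j ≤ n →
        ((∑ i, t i ^ j : ℤ) : ZMod p) = (∑ i, t₀ i ^ j : ℤ) := by
      intro t ht h j h2
      rcases Nat.eq_zero_or_pos j with rfl | h1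
      · simp
      have hne : (⟨j - 1, by omega⟩ : Fin (n + 1)) ≠ Fin.last n := by
        intro he
        have := congrArg Fin.val he
        simp at this
        omega
      have h3 := hmodp t ht h ⟨j - 1, by omega⟩
      simp only [hG, eval_localSys_of_ne _ _ _ _ _ hne, Nat.sub_add_cancel h1] at h3
      exact h3
    have hcast : ∀ j : ℕ, 0 < j → j < p → (j : ZMod p) ≠ 0 := fun j h0 h1 h2 =>
      absurd (Nat.le_of_dvd h0 ((ZMod.natCast_eq_zero_iff _ _).mp h2)) (by omega)
    refine hC₀ (ZMod p) (q : ZMod p) (w : ZMod p) ((∑ i, (q * t₀ i + w) ^ k : ℤ) : ZMod p)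
      (fun j => ((∑ i, t₀ i ^ j : ℤ) : ZMod p)) _ (fun j h1 h2 => hcast j h1 (by omega))
      (hcast k (by omega) hpk) (fun h => hq ((ZMod.intCast_zmod_eq_zero_iff_dvd _ _).mp h))
      ?_ ?_ ?_
    · intro r hr j h1 h2
      obtain ⟨t, ht, rfl⟩ := Finset.mem_image.mp hr
      rw [Finset.mem_filter] at ht
      rw [← hpsum t ht.1 ht.2 j h2]
      simp [hred]
    · intro r hr
      obtain ⟨t, ht, rfl⟩ := Finset.mem_image.mp hr
      rw [Finset.mem_filter] at ht
      have h1 := hmodp t ht.1 ht.2 (Fin.last n)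
      simp only [hG, sum_eval_localSys_last] at h1
      rw [Int.cast_sub, Int.cast_sub] at h1
      have h2 : ((∑ l ∈ Finset.range (n + 1), (k.choose l : ℤ) * q ^ l * w ^ (k - l) *
          ∑ i, t i ^ l : ℤ) : ZMod p) = (∑ l ∈ Finset.range (n + 1), (k.choose l : ℤ) * q ^ l *
          w ^ (k - l) * ∑ i, t₀ i ^ l : ℤ) := by
        rw [Int.cast_sum, Int.cast_sum]
        refine Finset.sum_congr rfl fun l hl => ?_
        rw [Int.cast_mul, Int.cast_mul _ (∑ i, t₀ i ^ l),
          hpsum t ht.1 ht.2 l (by simpa [Nat.lt_succ_iff] using hl)]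
      rw [h2] at h1
      rw [← sub_left_injective h1]
      simp [hred]
    · intro r hr ξ hξ hlast
      obtain ⟨t, ht, rfl⟩ := Finset.mem_image.mp hr
      rw [Finset.mem_filter] at ht
      choose δ hδ using fun i => ZMod.intCast_surjective (ξ i)
      have h1 := dvd_of_jacobian_kernel (Nat.prime_iff_prime_int.mp hp) q w t (hdet t ht.1) δ
        (fun l hl => by
          rw [← ZMod.intCast_zmod_eq_zero_iff_dvd, ← hξ l hl]
          simp [hδ, hred])
        (by
          rw [← ZMod.intCast_zmod_eq_zero_iff_dvd, ← hlast]
          simp [hδ, hred])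
      funext i
      rw [← hδ i, Pi.zero_apply, ZMod.intCast_zmod_eq_zero_iff_dvd]
      exact h1 i
  exact (Finset.card_le_mul_card_image S C₀ hfib).trans (Nat.mul_le_mul_left _ himage)

end LocalSystem

section SolutionCount

/-- The vector `((q x + b) ^ k, x, x ^ 2, …, x ^ (m - 1))`. -/
def sysVec (k m : ℕ) (q b x : ℤ) : Fin m → ℤ :=
  fun j => if (j : ℕ) = 0 then (q * x + b) ^ k else x ^ (j : ℕ)

/-- The integers in `[0, X / q]`. -/
noncomputable def intBox (X : ℝ) (q : ℕ) : Finset ℤ := Finset.Icc 0 ⌊X / q⌋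

lemma mem_intBox {X : ℝ} {q : ℕ} {x : ℤ} : x ∈ intBox X q ↔ 0 ≤ x ∧ (x : ℝ) ≤ X / q := by
  rw [intBox, Finset.mem_Icc, Int.le_floor]

lemma Icount_eq_energyOn (s k m : ℕ) (hm : 1 ≤ m) (X : ℝ) (q : ℕ) (b : ℤ) :
    Icount s k m X q b = energyOn (fun x : Fin s → ℤ => ∑ i, sysVec k m q b (x i))
      (Fintype.piFinset fun _ => intBox X q) := by
  rw [Icount, energyOn, ← Set.ncard_coe_finset]
  congr 1
  ext z
  simp only [Set.mem_ofPred_eq, Finset.mem_coe, Finset.mem_filter, Finset.mem_product,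
    Fintype.mem_piFinset, mem_intBox, Finset.sum_sub_distrib, sub_eq_zero, Finset.mem_Icc]
  rw [and_assoc]
  refine and_congr_right fun _ => and_congr_right fun _ => ?_
  constructor
  · rintro ⟨h1, h2⟩
    funext j
    rw [Finset.sum_apply, Finset.sum_apply]
    by_cases hj : (j : ℕ) = 0
    · simpa [sysVec, hj] using h1
    · simpa [sysVec, hj] using h2 j ⟨by omega, by omega⟩
  · intro h
    constructor
    · simpa [sysVec] using congrFun h ⟨0, hm⟩
    · intro j hj
      have hj0 : j ≠ 0 := by omega
      simpa [sysVec, hj0] using congrFun h ⟨j, by omega⟩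

lemma map_linear_pow (Λ : (ℤ → ℤ) →ₗ[ℤ] ℤ) (c d : ℤ) (n : ℕ) :
    Λ (fun t => (c * t + d) ^ n) =
      ∑ l ∈ Finset.range (n + 1), (n.choose l : ℤ) * c ^ l * d ^ (n - l) * Λ (fun t => t ^ l) := by
  have h1 : (fun t : ℤ => (c * t + d) ^ n) = ∑ l ∈ Finset.range (n + 1),
      ((n.choose l : ℤ) * c ^ l * d ^ (n - l)) • fun t : ℤ => t ^ l := by
    funext t
    simp only [Finset.sum_apply, Pi.smul_apply, smul_eq_mul, add_pow, mul_pow]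
    exact Finset.sum_congr rfl fun l _ => by ring
  rw [h1, map_sum]
  simp only [map_smul, smul_eq_mul]

lemma map_pow_eq_zero_of_affine (Λ : (ℤ → ℤ) →ₗ[ℤ] ℤ) {p : ℤ} (hp : p ≠ 0) (a : ℤ) (m : ℕ)
    (h : ∀ j < m, Λ (fun t => (p * t + a) ^ j) = 0) : ∀ j < m, Λ (fun t => t ^ j) = 0 := by
  intro j
  induction j using Nat.strong_induction_on with
  | _ j ih =>
    intro hj
    have h1 := h j hj
    rw [map_linear_pow, Finset.sum_range_succ, Finset.sum_eq_zero fun l hl => by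
      rw [ih l (Finset.mem_range.mp hl) ((Finset.mem_range.mp hl).trans hj), mul_zero]] at h1
    simpa [hp] using h1

lemma map_top_pow_eq_zero (Λ : (ℤ → ℤ) →ₗ[ℤ] ℤ) {Q : ℤ} (hQ : Q ≠ 0) (w : ℤ) {m k : ℕ}
    (hmk : m ≤ k) (h : ∀ j < m, Λ (fun t => t ^ j) = 0) (hk : Λ (fun t => (Q * t + w) ^ k) = 0)
    (hcop : IsCoprime ((k.choose m : ℤ) * w ^ (k - m)) Q) (hlt : |Λ (fun t => t ^ m)| < Q) :
    Λ (fun t => t ^ m) = 0 := by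
  refine Int.eq_zero_of_abs_lt_dvd ?_ hlt
  rw [map_linear_pow, ← Finset.sum_range_add_sum_Ico _ (by omega : m + 1 ≤ k + 1),
    Finset.sum_range_succ, Finset.sum_eq_zero fun l hl => by
      rw [h l (Finset.mem_range.mp hl), mul_zero], zero_add] at hk
  refine hcop.symm.dvd_of_dvd_mul_left ?_
  have h1 : Q ^ (m + 1) ∣ ∑ l ∈ Finset.Ico (m + 1) (k + 1),
      (k.choose l : ℤ) * Q ^ l * w ^ (k - l) * Λ (fun t => t ^ l) := by
    refine Finset.dvd_sum fun l hl => ?_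
    rw [Finset.mem_Ico] at hl
    exact (((pow_dvd_pow Q hl.1).mul_left _).mul_right _).mul_right _
  obtain ⟨c, hc⟩ := h1
  rw [hc] at hk
  refine ⟨-c, mul_left_cancel₀ (pow_ne_zero m hQ) ?_⟩
  linear_combination hk

/-- The linear functional `f ↦ ∑ f(uᵢ)`. -/
def evalSum {α : Type*} [Fintype α] (u : α → ℤ) : (ℤ → ℤ) →ₗ[ℤ] ℤ where
  toFun f := ∑ i, f (u i)
  map_add' f g := Finset.sum_add_distrib
  map_smul' c f := by simp [Finset.mul_sum]

lemma evalSum_apply {α : Type*} [Fintype α] (u : α → ℤ) (f : ℤ → ℤ) :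
    evalSum u f = ∑ i, f (u i) := rfl

lemma sum_sysVec_apply {α : Type*} [Fintype α] (k m : ℕ) (q b : ℤ) (u : α → ℤ) (j : Fin m) :
    (∑ i, sysVec k m q b (u i)) j = evalSum u (fun t => sysVec k m q b t j) := by
  rw [Finset.sum_apply, evalSum_apply]

lemma map_pow_eq_zero_of_sysVec (Λ : (ℤ → ℤ) →ₗ[ℤ] ℤ) (k m : ℕ) (q b : ℤ)
    (h0 : Λ (fun _ => 1) = 0) (h : ∀ j, Λ (fun t => sysVec k m q b t j) = 0) :
    ∀ j < m, Λ (fun t => t ^ j) = 0 := by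
  intro j hj
  by_cases hj0 : j = 0
  · simpa [hj0] using h0
  · simpa [sysVec, hj0] using h ⟨j, hj⟩

lemma map_last_eq_zero_of_sysVec (Λ : (ℤ → ℤ) →ₗ[ℤ] ℤ) (k m : ℕ) (hm : 0 < m) (q b : ℤ)
    (h : ∀ j, Λ (fun t => sysVec k m q b t j) = 0) : Λ (fun t => (q * t + b) ^ k) = 0 := by
  simpa [sysVec] using h ⟨0, hm⟩

lemma evalSum_pow_mem {r : ℕ} {u : Fin r → ℤ} {B : ℤ} (hu : ∀ i, 0 ≤ u i ∧ u i ≤ B) (m : ℕ) :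
    0 ≤ evalSum u (fun t => t ^ m) ∧ evalSum u (fun t => t ^ m) ≤ r * B ^ m := by
  constructor
  · rw [evalSum_apply]
    exact Finset.sum_nonneg fun i _ => pow_nonneg (hu i).1 m
  · have := Finset.sum_le_sum fun i (_ : i ∈ Finset.univ) =>
      pow_le_pow_left₀ (hu i).1 (hu i).2 m
    simpa [evalSum_apply] using this

lemma card_fibre_le (r k m p q : ℕ) (X : ℝ) (b a : ℤ) (hp : 0 < p) (hq : 0 < q) (hm : 0 < m)
    (ha : a < p) (hmk : m ≤ k)
    (hcop : IsCoprime ((k.choose m : ℤ) * (b + a * q) ^ (k - m)) ((p * q : ℕ) : ℤ))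
    (hB : 2 * (r : ℤ) * ⌊X / (p * q : ℕ)⌋ ^ m < (p * q : ℕ)) (U : Finset ℤ)
    (hU : ∀ t ∈ U, (p : ℤ) ∣ t - a ∧ t ∈ intBox X q) (h : Fin m → ℤ) (ha0 : 0 ≤ a) :
    (((Fintype.piFinset fun _ : Fin r => U) ×ˢ (Fintype.piFinset fun _ : Fin r => U)).filter
      fun z => ∑ i, sysVec k m q b (z.1 i) - ∑ i, sysVec k m q b (z.2 i) = h).card ≤
      Icount r k (m + 1) X (p * q) (b + a * q) := by
  set Q : ℕ := p * q with hQ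
  set w : ℤ := b + a * q with hw
  set B : ℤ := ⌊X / Q⌋ with hBdef
  have hp0 : (p : ℤ) ≠ 0 := by exact_mod_cast hp.ne'
  have hppos : (0 : ℤ) < p := by exact_mod_cast hp
  have hQ0 : (Q : ℤ) ≠ 0 := by exact_mod_cast (Nat.mul_pos hp hq).ne'
  set F := ((Fintype.piFinset fun _ : Fin r => U) ×ˢ (Fintype.piFinset fun _ : Fin r => U)).filter
      fun z => ∑ i, sysVec k m q b (z.1 i) - ∑ i, sysVec k m q b (z.2 i) = h with hF
  rcases F.eq_empty_or_nonempty with hemp | ⟨z₀, hz₀⟩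
  · rw [hemp]
    simp
  set σ : ℤ → ℤ := fun t => (t - a) / p with hσ
  have hσU : ∀ t ∈ U, p * σ t + a = t := fun t ht => by
    rw [hσ]
    simp only
    rw [Int.mul_ediv_cancel' (hU t ht).1]
    ring
  have hσbox : ∀ t ∈ U, σ t ∈ intBox X Q := by
    intro t ht
    have h1 := hσU t ht
    obtain ⟨-, h2⟩ := hU t ht
    rw [mem_intBox] at h2 ⊢
    constructor
    · by_contra hneg
      push Not at hneg
      nlinarith
    · have h3 : (p : ℝ) * σ t ≤ t := by
        have : (p : ℤ) * σ t ≤ t := by linarith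
        exact_mod_cast this
      have hpr : (0 : ℝ) < p := by exact_mod_cast hp
      rw [hQ, Nat.cast_mul, mul_comm (p : ℝ), ← div_div, le_div_iff₀ hpr]
      linarith [h2.2]
  have hmem : ∀ z ∈ F, (∀ i, z.1 i ∈ U) ∧ (∀ i, z.2 i ∈ U) ∧
      ∑ i, sysVec k m q b (z.1 i) - ∑ i, sysVec k m q b (z.2 i) = h := by
    intro z hz
    simpa [hF, Finset.mem_filter, Fintype.mem_piFinset, and_assoc] using hz
  set τ : (Fin r → ℤ) × (Fin r → ℤ) → (Fin r → ℤ) × (Fin r → ℤ) :=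
    fun z => (fun i => σ (z.1 i), fun i => σ (z.2 i)) with hτ
  rw [Icount_eq_energyOn _ _ _ (by omega)]
  refine le_trans ?_ (card_sub_eq_le_energyOn (fun x : Fin r → ℤ => ∑ i, sysVec k (m + 1) Q w (x i))
    (Fintype.piFinset fun _ => intBox X Q)
    (∑ i, sysVec k (m + 1) Q w (σ (z₀.1 i)) - ∑ i, sysVec k (m + 1) Q w (σ (z₀.2 i))))
  refine Finset.card_le_card_of_injOn τ (fun z hz => ?_) fun z hz z' hz' hzz => ?_
  · obtain ⟨h1, h2, h3⟩ := hmem z hz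
    obtain ⟨h1', h2', h3'⟩ := hmem z₀ hz₀
    rw [Finset.mem_coe, Finset.mem_filter, Finset.mem_product, Fintype.mem_piFinset,
      Fintype.mem_piFinset]
    refine ⟨⟨fun i => hσbox _ (h1 i), fun i => hσbox _ (h2 i)⟩, ?_⟩
    set Λ : (ℤ → ℤ) →ₗ[ℤ] ℤ := (evalSum (fun i => σ (z.1 i)) - evalSum (fun i => σ (z.2 i))) -
      (evalSum (fun i => σ (z₀.1 i)) - evalSum (fun i => σ (z₀.2 i))) with hΛ
    have hΛcomp : ∀ f : ℤ → ℤ, Λ (fun t => f (p * t + a)) =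
        (evalSum z.1 f - evalSum z.2 f) - (evalSum z₀.1 f - evalSum z₀.2 f) := by
      intro f
      simp only [hΛ, LinearMap.sub_apply, evalSum_apply, hσU _ (h1 _), hσU _ (h2 _), hσU _ (h1' _),
        hσU _ (h2' _)]
    have hΛvec : ∀ j, Λ (fun t => sysVec k m q b (p * t + a) j) = 0 := by
      intro j
      rw [hΛcomp (fun t => sysVec k m q b t j)]
      simp only [← sum_sysVec_apply, ← Pi.sub_apply]
      rw [h3, h3', sub_self, Pi.zero_apply]
    have hone : Λ (fun _ => 1) = 0 := by
      simp [hΛ, evalSum_apply]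
    have hlow : ∀ j < m, Λ (fun t => t ^ j) = 0 := by
      refine map_pow_eq_zero_of_affine Λ hp0 a m fun j hj => ?_
      by_cases hj0 : j = 0
      · simpa [hj0] using hone
      · simpa [sysVec, hj0] using hΛvec ⟨j, hj⟩
    have hlast : Λ (fun t => ((Q : ℤ) * t + w) ^ k) = 0 := by
      have h4 := hΛvec ⟨0, hm⟩
      simp only [sysVec, if_true] at h4
      rw [← h4]
      congr 1
      funext t
      rw [hQ, hw]
      push_cast
      ring
    have hbox : ∀ t ∈ U, 0 ≤ σ t ∧ σ t ≤ B := fun t ht => by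
      simpa [intBox, ← hBdef] using hσbox t ht
    have htop : Λ (fun t => t ^ m) = 0 := by
      refine map_top_pow_eq_zero Λ hQ0 w hmk hlow hlast hcop ?_
      have e1 := evalSum_pow_mem (fun i => hbox _ (h1 i)) m
      have e2 := evalSum_pow_mem (fun i => hbox _ (h2 i)) m
      have e3 := evalSum_pow_mem (fun i => hbox _ (h1' i)) m
      have e4 := evalSum_pow_mem (fun i => hbox _ (h2' i)) m
      rw [abs_lt]
      simp only [hΛ, LinearMap.sub_apply]
      constructor <;> nlinarith
    funext j
    rw [← sub_eq_zero]
    simp only [Pi.sub_apply, sum_sysVec_apply]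
    change Λ (fun t => sysVec k (m + 1) Q w t j) = 0
    by_cases hj0 : (j : ℕ) = 0
    · simpa only [sysVec, hj0, if_true] using hlast
    · simp only [sysVec, hj0, if_false]
      rcases Nat.lt_succ_iff_lt_or_eq.mp j.isLt with hj | hj
      · exact hlow j hj
      · rw [hj]
        exact htop
  · obtain ⟨h1, h2, -⟩ := hmem z hz
    obtain ⟨h1', h2', -⟩ := hmem z' hz'
    refine Prod.ext (funext fun i => ?_) (funext fun i => ?_)
    · have := congrFun (congrArg Prod.fst hzz) i
      simp only [hτ] at this
      rw [← hσU _ (h1 i), ← hσU _ (h1' i), this]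
    · have := congrFun (congrArg Prod.snd hzz) i
      simp only [hτ] at this
      rw [← hσU _ (h2 i), ← hσU _ (h2' i), this]

end SolutionCount

section ClassBound

lemma pow_dvd_localSys_sub {n k r : ℕ} (p q b a : ℤ) (x y : Fin (n + 1) → ℤ)
    (u v : Fin r → ℤ) (hu : ∀ i, p ∣ u i - a) (hv : ∀ i, p ∣ v i - a)
    (h : ∑ i, sysVec k (n + 1) q b (x i) + ∑ i, sysVec k (n + 1) q b (u i) =
      ∑ i, sysVec k (n + 1) q b (y i) + ∑ i, sysVec k (n + 1) q b (v i)) (j : Fin (n + 1)) :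
    p ^ ((j : ℕ) + 1) ∣ ∑ i, (localSys n k q (b + a * q) j).eval (x i - a) -
      ∑ i, (localSys n k q (b + a * q) j).eval (y i - a) := by
  set Λ : (ℤ → ℤ) →ₗ[ℤ] ℤ := evalSum x + evalSum u - (evalSum y + evalSum v) with hΛ
  have hvec : ∀ j, Λ (fun t => sysVec k (n + 1) q b t j) = 0 := by
    intro j
    have := congrFun h j
    simp only [Pi.add_apply, sum_sysVec_apply] at this
    simp only [hΛ, LinearMap.sub_apply, LinearMap.add_apply]
    rw [this, sub_self]
  have hone : Λ (fun _ => 1) = 0 := by simp [hΛ, evalSum_apply]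
  have hlow := map_pow_eq_zero_of_sysVec Λ k (n + 1) q b hone hvec
  have hlast := map_last_eq_zero_of_sysVec Λ k (n + 1) (by omega) q b hvec
  have hshift : ∀ j < n + 1, Λ (fun t => (t - a) ^ j) = 0 := by
    intro j hj
    have h1 := map_linear_pow Λ 1 (-a) j
    simp only [one_mul, ← sub_eq_add_neg] at h1
    rw [h1]
    refine Finset.sum_eq_zero fun l hl => ?_
    rw [hlow l (by rw [Finset.mem_range] at hl; omega), mul_zero]
  have hloc : Λ (fun t => (localSys n k q (b + a * q) j).eval (t - a)) = 0 := by
    by_cases hj : j = Fin.last n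
    · subst hj
      have h1 : (fun t => (localSys n k q (b + a * q) (Fin.last n)).eval (t - a)) =
          (fun t => (q * t + b) ^ k) - ∑ l ∈ Finset.range (n + 1),
            ((k.choose l : ℤ) * q ^ l * (b + a * q) ^ (k - l)) • fun t : ℤ => (t - a) ^ l := by
        funext t
        rw [eval_localSys_last]
        simp only [Pi.sub_apply, Finset.sum_apply, Pi.smul_apply, smul_eq_mul]
        congr 2
        ring
      rw [h1, map_sub, hlast, map_sum, zero_sub, neg_eq_zero]
      refine Finset.sum_eq_zero fun l hl => ?_
      rw [map_smul, hshift l (Finset.mem_range.mp hl), smul_zero]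
    · simp_rw [eval_localSys_of_ne _ _ _ _ _ hj]
      refine hshift _ ?_
      have := Fin.val_lt_last hj
      omega
  have hsplit : ∑ i, (localSys n k q (b + a * q) j).eval (x i - a) -
      ∑ i, (localSys n k q (b + a * q) j).eval (y i - a) =
      ∑ i, (localSys n k q (b + a * q) j).eval (v i - a) -
      ∑ i, (localSys n k q (b + a * q) j).eval (u i - a) := by
    simp only [hΛ, LinearMap.sub_apply, LinearMap.add_apply, evalSum_apply] at hloc
    linear_combination hloc
  rw [hsplit]
  exact dvd_sub (Finset.dvd_sum fun i _ => pow_dvd_eval_localSys _ _ (hv i) j)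
    (Finset.dvd_sum fun i _ => pow_dvd_eval_localSys _ _ (hu i) j)

lemma exists_energyOn_class_le (n k : ℕ) (hk : n + 1 ≤ k) : ∃ C₀ : ℕ, ∀ (p q r : ℕ) (X : ℝ)
    (b a : ℤ) (T : Finset (Fin (n + 1) → ℤ)) (U : Finset ℤ), p.Prime → k < p → 0 < q →
    ¬ (p : ℤ) ∣ q → 0 ≤ a → a < p →
    IsCoprime ((k.choose (n + 1) : ℤ) * (b + a * q) ^ (k - (n + 1))) ((p * q : ℕ) : ℤ) →
    2 * (r : ℤ) * ⌊X / (p * q : ℕ)⌋ ^ (n + 1) < (p * q : ℕ) →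
    ⌊X / q⌋ < (p : ℤ) ^ (n + 2) →
    (∀ t ∈ U, (p : ℤ) ∣ t - a ∧ t ∈ intBox X q) →
    (∀ x ∈ T, (∀ i, x i ∈ intBox X q) ∧ ¬ (p : ℤ) ∣ (jacMatrix n k fun i => q * x i + b).det) →
    energyOn (fun z : (Fin (n + 1) → ℤ) × (Fin r → ℤ) =>
        ∑ i, sysVec k (n + 1) q b (z.1 i) + ∑ l, sysVec k (n + 1) q b (z.2 l))
      (T ×ˢ Fintype.piFinset fun _ => U) ≤
    Icount r k (n + 2) X (p * q) (b + a * q) * (C₀ * p ^ ((n + 1) * (n + 2) / 2) *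
      p ^ ((n + 1) * (n + 2))) := by
  obtain ⟨C₀, hC₀⟩ := exists_card_localSys_le n k hk
  refine ⟨C₀, fun p q r X b a T U hp hpk hq hpq ha0 hap hcop hB hX hU hT => ?_⟩
  set Z := ((T ×ˢ Fintype.piFinset fun _ : Fin r => U) ×ˢ
    (T ×ˢ Fintype.piFinset fun _ : Fin r => U)).filter
    (fun zz => ∑ i, sysVec k (n + 1) q b (zz.1.1 i) + ∑ l, sysVec k (n + 1) q b (zz.1.2 l) =
      ∑ i, sysVec k (n + 1) q b (zz.2.1 i) + ∑ l, sysVec k (n + 1) q b (zz.2.2 l)) with hZ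
  change Z.card ≤ _
  have hmem : ∀ zz ∈ Z, zz.1.1 ∈ T ∧ (∀ i, zz.1.2 i ∈ U) ∧ zz.2.1 ∈ T ∧ (∀ i, zz.2.2 i ∈ U) ∧
      ∑ i, sysVec k (n + 1) q b (zz.1.1 i) + ∑ l, sysVec k (n + 1) q b (zz.1.2 l) =
      ∑ i, sysVec k (n + 1) q b (zz.2.1 i) + ∑ l, sysVec k (n + 1) q b (zz.2.2 l) := by
    intro zz hzz
    simpa [hZ, Finset.mem_filter, Finset.mem_product, Fintype.mem_piFinset, and_assoc] using hzz
  set f : ((Fin (n + 1) → ℤ) × (Fin r → ℤ)) × ((Fin (n + 1) → ℤ) × (Fin r → ℤ)) →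
    (Fin (n + 1) → ℤ) × (Fin (n + 1) → ℤ) := fun zz => (zz.1.1, zz.2.1) with hf
  have hfib : ∀ xy ∈ Z.image f, (Z.filter fun zz => f zz = xy).card ≤
      Icount r k (n + 2) X (p * q) (b + a * q) := by
    rintro ⟨x, y⟩ -
    refine le_trans ?_ (card_fibre_le r k (n + 1) p q X b a hp.pos hq (by omega) hap hk hcop hB U hU
      (∑ i, sysVec k (n + 1) q b (y i) - ∑ i, sysVec k (n + 1) q b (x i)) ha0)
    refine Finset.card_le_card_of_injOn (fun zz => (zz.1.2, zz.2.2)) (fun zz hzz => ?_)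
      fun zz hzz zz' hzz' he => ?_
    · rw [Finset.mem_coe, Finset.mem_filter] at hzz
      obtain ⟨-, h2, -, h4, h5⟩ := hmem zz hzz.1
      obtain ⟨rfl, rfl⟩ := Prod.mk.inj hzz.2
      rw [Finset.mem_coe, Finset.mem_filter, Finset.mem_product, Fintype.mem_piFinset,
        Fintype.mem_piFinset]
      refine ⟨⟨h2, h4⟩, ?_⟩
      rw [sub_eq_sub_iff_add_eq_add]
      exact (add_comm _ _).trans h5
    · rw [Finset.mem_coe, Finset.mem_filter] at hzz hzz'
      have h1 := hzz.2.trans hzz'.2.symm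
      simp only [hf, Prod.mk.injEq] at h1 he
      exact Prod.ext (Prod.ext h1.1 he.1) (Prod.ext h1.2 he.2)
  refine (Finset.card_le_mul_card_image Z _ hfib).trans (Nat.mul_le_mul_left _ ?_)
  have himg : ((Z.image f).image Prod.snd).card ≤ p ^ ((n + 1) * (n + 2)) := by
    have h1 : (Z.image f).image Prod.snd ⊆
        Fintype.piFinset fun _ : Fin (n + 1) => Finset.Ico (0 : ℤ) ((p : ℤ) ^ (n + 2)) := by
      intro y hy
      obtain ⟨xy, hxy, rfl⟩ := Finset.mem_image.mp hy
      obtain ⟨zz, hzz, rfl⟩ := Finset.mem_image.mp hxy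
      rw [Fintype.mem_piFinset]
      intro i
      have h2 := (hT _ (hmem zz hzz).2.2.1).1 i
      rw [intBox, Finset.mem_Icc] at h2
      exact Finset.mem_Ico.mpr ⟨h2.1, h2.2.trans_lt hX⟩
    refine (Finset.card_le_card h1).trans (le_of_eq ?_)
    rw [Fintype.card_piFinset_const, Int.card_Ico, sub_zero, ← Nat.cast_pow, Int.toNat_natCast,
      ← pow_mul, mul_comm]
  refine (Finset.card_le_mul_card_image (f := Prod.snd) (Z.image f)
    (C₀ * p ^ ((n + 1) * (n + 2) / 2)) fun y _ => ?_).trans (Nat.mul_le_mul_left _ himg)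
  set J := (Z.image f).filter fun xy => xy.2 = y with hJ
  have hJmem : ∀ xy ∈ J, ∃ u v : Fin r → ℤ, (∀ i, u i ∈ U) ∧ (∀ i, v i ∈ U) ∧ xy.1 ∈ T ∧
      ∑ i, sysVec k (n + 1) q b (xy.1 i) + ∑ l, sysVec k (n + 1) q b (u l) =
      ∑ i, sysVec k (n + 1) q b (y i) + ∑ l, sysVec k (n + 1) q b (v l) := by
    intro xy hxy
    obtain ⟨h1, rfl⟩ := Finset.mem_filter.mp hxy
    obtain ⟨zz, hzz, rfl⟩ := Finset.mem_image.mp h1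
    obtain ⟨h1, h2, h3, h4, h5⟩ := hmem zz hzz
    exact ⟨zz.1.2, zz.2.2, h2, h4, h1, h5⟩
  set sh : (Fin (n + 1) → ℤ) × (Fin (n + 1) → ℤ) → Fin (n + 1) → ℤ := fun xy i => xy.1 i - a
    with hsh
  have hinj : Set.InjOn sh J := by
    intro xy hxy xy' hxy' he
    refine Prod.ext (funext fun i => ?_) ?_
    · have := congrFun he i
      simp only [hsh] at this
      linarith
    · rw [(Finset.mem_filter.mp hxy).2, (Finset.mem_filter.mp hxy').2]
  rw [← Finset.card_image_of_injOn hinj]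
  refine hC₀ p hp hpk q (b + a * q) hpq
    (fun j => ∑ i, (localSys n k q (b + a * q) j).eval (y i - a)) _ ?_ ?_ ?_
  · intro t ht t' ht' hd
    obtain ⟨xy, hxy, rfl⟩ := Finset.mem_image.mp ht
    obtain ⟨xy', hxy', rfl⟩ := Finset.mem_image.mp ht'
    obtain ⟨-, -, -, -, h1, -⟩ := hJmem xy hxy
    obtain ⟨-, -, -, -, h1', -⟩ := hJmem xy' hxy'
    funext i
    have h2 := (hT _ h1).1 i
    have h2' := (hT _ h1').1 i
    rw [intBox, Finset.mem_Icc] at h2 h2'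
    have h3 := Int.eq_zero_of_abs_lt_dvd (hd i) (by
      simp only [hsh]
      rw [abs_lt]
      constructor <;> linarith)
    linarith
  · intro t ht
    obtain ⟨xy, hxy, rfl⟩ := Finset.mem_image.mp ht
    obtain ⟨-, -, -, -, h1, -⟩ := hJmem xy hxy
    have h2 := (hT _ h1).2
    convert h2 using 5
    simp only [hsh]
    ring
  · intro t ht j
    obtain ⟨xy, hxy, rfl⟩ := Finset.mem_image.mp ht
    obtain ⟨u, v, hu, hv, -, h5⟩ := hJmem xy hxy
    exact pow_dvd_localSys_sub p q b a xy.1 y u v (fun i => (hU _ (hu i)).1)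
      (fun i => (hU _ (hv i)).1) h5 j

end ClassBound

section GoodBound

lemma exists_energyOn_nonsingular_le (n k : ℕ) (hk : n + 1 ≤ k) : ∃ C₀ : ℕ, ∀ (p q r : ℕ) (X : ℝ)
    (b : ℤ) (A : Finset (Fin (n + 1 + r) → ℤ)), p.Prime → k < p → 0 < q →
    ¬ (p : ℤ) ∣ q → 1 ≤ r → IsCoprime b q →
    IsCoprime (k.choose (n + 1) : ℤ) ((p : ℤ) * q) →
    2 * (r : ℤ) * ⌊X / (p * q : ℕ)⌋ ^ (n + 1) < (p * q : ℕ) →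
    ⌊X / q⌋ < (p : ℤ) ^ (n + 2) →
    (∀ x ∈ A, (∀ i, x i ∈ intBox X q) ∧ (∀ i, ¬ (p : ℤ) ∣ q * x i + b) ∧
      ¬ (p : ℤ) ∣ (jacMatrix n k fun i => q * x (Fin.castAdd r i) + b).det) →
    A.Nonempty →
    ∃ a : ℤ, 0 ≤ a ∧ a < p ∧ IsCoprime (b + a * q) ((p : ℤ) * q) ∧
    (energyOn (fun x : Fin (n + 1 + r) → ℤ => ∑ i, sysVec k (n + 1) q b (x i)) A : ℝ) ≤
    (p : ℝ) ^ (2 * r) * (Icount r k (n + 2) X (p * q) (b + a * q) *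
      (C₀ * (p : ℝ) ^ ((n + 1) * (n + 2) / 2) * (p : ℝ) ^ ((n + 1) * (n + 2)))) := by
  obtain ⟨C₀, hC₀⟩ := exists_energyOn_class_le n k hk
  refine ⟨C₀, fun p q r X b A hp hpk hq hpq hr hbq hchoose hB hX hA ⟨x₀, hx₀⟩ => ?_⟩
  have hp' := Nat.prime_iff_prime_int.mp hp
  have hppos : (0 : ℤ) < p := by exact_mod_cast hp.pos
  set L : Finset ℤ := (Finset.Ico 0 (p : ℤ)).filter fun a => ¬ (p : ℤ) ∣ b + a * q with hL
  set V : ℤ → Finset ℤ := fun a => (intBox X q).filter fun t => (p : ℤ) ∣ t - a with hV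
  set T : Finset (Fin (n + 1) → ℤ) := (Fintype.piFinset fun _ => intBox X q).filter fun x =>
    ¬ (p : ℤ) ∣ (jacMatrix n k fun i => q * x i + b).det with hT
  set Φ : (Fin (n + 1) → ℤ) × (Fin r → ℤ) → Fin (n + 1) → ℤ := fun z =>
    ∑ i, sysVec k (n + 1) q b (z.1 i) + ∑ l, sysVec k (n + 1) q b (z.2 l) with hΦ
  have hclass : ∀ t ∈ intBox X q, ¬ (p : ℤ) ∣ q * t + b → t % p ∈ L ∧ t ∈ V (t % p) := by
    intro t ht hnd
    have hdvd : (p : ℤ) ∣ t - t % p := Int.dvd_self_sub_emod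
    refine ⟨Finset.mem_filter.mpr ⟨Finset.mem_Ico.mpr ⟨Int.emod_nonneg _ hppos.ne',
      Int.emod_lt_of_pos _ hppos⟩, fun h => hnd ?_⟩, Finset.mem_filter.mpr ⟨ht, hdvd⟩⟩
    have : (q : ℤ) * t + b = (b + t % p * q) + q * (t - t % p) := by ring
    rw [this]
    exact dvd_add h (hdvd.mul_left _)
  have hdisj : (L : Set ℤ).PairwiseDisjoint V := by
    intro a ha a' ha' hne
    rw [Function.onFun, Finset.disjoint_left]
    intro t ht ht'
    refine hne ?_
    simp only [hV, Finset.mem_filter] at ht ht'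
    simp only [hL, Finset.coe_filter, Finset.mem_Ico, Set.mem_ofPred_eq] at ha ha'
    have h1 : (p : ℤ) ∣ a - a' := by
      have := dvd_sub ht'.2 ht.2
      rwa [sub_sub_sub_cancel_left] at this
    have h2 := Int.eq_zero_of_abs_lt_dvd h1 (by rw [abs_lt]; constructor <;> linarith)
    linarith
  have hle : energyOn (fun x : Fin (n + 1 + r) → ℤ => ∑ i, sysVec k (n + 1) q b (x i)) A ≤
      energyOn Φ (T ×ˢ Fintype.piFinset fun _ => L.biUnion V) := by
    refine energyOn_le_of_injOn _ _ A _
      (fun x => (fun i => x (Fin.castAdd r i), fun i => x (Fin.natAdd (n + 1) i))) ?_ ?_ ?_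
    · intro x _ y _ h
      simp only [Prod.mk.injEq] at h
      funext i
      refine Fin.addCases (fun i => ?_) (fun i => ?_) i
      · exact congrFun h.1 i
      · exact congrFun h.2 i
    · intro x hx
      obtain ⟨h1, h2, h3⟩ := hA x hx
      refine Finset.mem_product.mpr ⟨Finset.mem_filter.mpr
        ⟨Fintype.mem_piFinset.mpr fun i => h1 _, h3⟩, Fintype.mem_piFinset.mpr fun i => ?_⟩
      have := hclass _ (h1 (Fin.natAdd (n + 1) i)) (h2 _)
      exact Finset.mem_biUnion.mpr ⟨_, this.1, this.2⟩
    · intro x _ y _ h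
      simpa [hΦ, Fin.sum_univ_add] using h
  have hLne : L.Nonempty := by
    obtain ⟨h1, h2, -⟩ := hA x₀ hx₀
    exact ⟨_, (hclass _ (h1 (Fin.natAdd (n + 1) ⟨0, hr⟩)) (h2 _)).1⟩
  obtain ⟨a, haL, hmax⟩ := L.exists_max_image (fun a => energyOn Φ (T ×ˢ Fintype.piFinset fun _ => V a))
    hLne
  have haL' := haL
  simp only [hL, Finset.mem_filter, Finset.mem_Ico] at haL'
  have hcop : IsCoprime (b + a * q) ((p : ℤ) * q) := by
    refine IsCoprime.mul_right ?_ ?_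
    · exact ((hp'.coprime_iff_not_dvd).mpr haL'.2).symm
    · exact IsCoprime.add_mul_right_left hbq a
  refine ⟨a, haL'.1.1, haL'.1.2, hcop, ?_⟩
  have hbound := hC₀ p q r X b a T (V a) hp hpk hq hpq haL'.1.1 haL'.1.2
    (by
      rw [Nat.cast_mul]
      exact hchoose.mul_left hcop.pow_left) hB hX
    (fun t ht => ⟨(Finset.mem_filter.mp ht).2, (Finset.mem_filter.mp ht).1⟩)
    fun x hx => ⟨Fintype.mem_piFinset.mp (Finset.mem_filter.mp hx).1, (Finset.mem_filter.mp hx).2⟩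
  have hsum := energyOn_prod_le_sum_classes_int (sysVec k (n + 1) q b)
    (fun x : Fin (n + 1) → ℤ => ∑ i, sysVec k (n + 1) q b (x i)) T r hr L V hdisj
  have hLcard : (L.card : ℝ) ≤ p := by
    have h1 := Finset.card_filter_le (Finset.Ico 0 (p : ℤ)) fun a => ¬ (p : ℤ) ∣ b + a * q
    rw [Int.card_Ico, sub_zero, Int.toNat_natCast] at h1
    exact_mod_cast h1
  calc _ ≤ (energyOn Φ (T ×ˢ Fintype.piFinset fun _ => L.biUnion V) : ℝ) := by exact_mod_cast hle
    _ ≤ _ := hsum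
    _ ≤ (L.card : ℝ) ^ (2 * r - 1) *
        (L.card * (energyOn Φ (T ×ˢ Fintype.piFinset fun _ => V a) : ℝ)) := by
      refine mul_le_mul_of_nonneg_left ?_ (by positivity)
      rw [← nsmul_eq_mul]
      exact Finset.sum_le_card_nsmul _ _ _ fun c hc => by exact_mod_cast hmax c hc
    _ = (L.card : ℝ) ^ (2 * r) * (energyOn Φ (T ×ˢ Fintype.piFinset fun _ => V a) : ℝ) := by
      rw [← mul_assoc, ← pow_succ]
      congr 2
      omega
    _ ≤ (p : ℝ) ^ (2 * r) * (energyOn Φ (T ×ˢ Fintype.piFinset fun _ => V a) : ℝ) :=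
      mul_le_mul_of_nonneg_right (pow_le_pow_left₀ (Nat.cast_nonneg _) hLcard _) (Nat.cast_nonneg _)
    _ ≤ _ := by
      refine mul_le_mul_of_nonneg_left ?_ (pow_nonneg (Nat.cast_nonneg _) _)
      refine (Nat.cast_le.mpr hbound).trans (le_of_eq ?_)
      push_cast
      ring

end GoodBound

section Decomposition

lemma exists_energyOn_le_of_cover {ι κ : Type*} [Fintype ι] [DecidableEq ι] [Nonempty ι] [Fintype κ]
    (ψ : ℤ → κ → ℤ) (W : Finset ℤ) (P : Finset ℕ) (good : ℕ → Finset (ι → ℤ))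
    (hcover : ∀ x ∈ Fintype.piFinset fun _ : ι => W,
      (∃ i, x i = 0) ∨ (∃ i j, i ≠ j ∧ x i = x j) ∨ ∃ p ∈ P, x ∈ good p)
    (hW : 12 * (Fintype.card ι : ℝ) ^ 2 + (12 * (Fintype.card ι : ℝ) ^ 4 *
      (6 * (Fintype.card ι : ℝ) ^ 2) ^ (Fintype.card ι - 2)) ^ 2 ≤ W.card) :
    ∃ p ∈ P, (good p).Nonempty ∧
      (energyOn (fun x : ι → ℤ => ∑ l, ψ (x l)) (Fintype.piFinset fun _ => W) : ℝ) ≤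
        12 * (P.card : ℝ) ^ 2 * energyOn (fun x : ι → ℤ => ∑ l, ψ (x l)) (good p) := by
  classical
  set φ : (ι → ℤ) → κ → ℤ := fun x => ∑ l, ψ (x l) with hφ
  set A : Finset (ι → ℤ) := Fintype.piFinset fun _ => W with hA
  set s : ℝ := (Fintype.card ι : ℝ) with hs
  set C : ℝ := (6 * s ^ 2) ^ (Fintype.card ι - 2) with hC
  set E : ℝ := (energyOn φ A : ℝ) with hE
  have hs1 : 1 ≤ s := by
    rw [hs]
    exact_mod_cast Fintype.card_pos (α := ι)
  have hC0 : 0 < C := by positivity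
  have hWE : (W.card : ℝ) ≤ E := by
    have h1 := card_le_energyOn φ A
    rw [hA, Fintype.card_piFinset, Finset.prod_const, Finset.card_univ] at h1
    have h2 : W.card ≤ W.card ^ Fintype.card ι := Nat.le_self_pow Fintype.card_ne_zero _
    rw [hE]
    exact_mod_cast h2.trans h1
  have hWpos : (0 : ℝ) < W.card := by
    refine lt_of_lt_of_le ?_ hW
    positivity
  have hEpos : 0 < E := hWpos.trans_le hWE
  set Z : ι → Finset (ι → ℤ) := fun i => A.filter fun x => x i = 0 with hZ
  set D : ι × ι → Finset (ι → ℤ) := fun ij => A.filter fun x => x ij.1 = x ij.2 with hD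
  set offd : Finset (ι × ι) := Finset.univ.offDiag with hoffd
  set piece : Fin 3 → Finset (ι → ℤ) :=
    ![P.biUnion good, Finset.univ.biUnion Z, offd.biUnion D] with hpiece
  have hZle : (energyOn φ (Finset.univ.biUnion Z) : ℝ) ≤ s ^ 2 * (E / W.card) := by
    have h1 := energyOn_le_of_subset_biUnion φ _ Finset.univ Z (Finset.Subset.refl _)
    have h2 : ∀ i, (energyOn φ (Z i) : ℝ) ≤ E / W.card := fun i => by
      rw [le_div_iff₀ hWpos, mul_comm, hE]
      exact_mod_cast card_mul_energyOn_coord_eq_le ψ W 0 i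
    have h3 : (∑ i, energyOn φ (Z i) : ℝ) ≤ s * (E / W.card) := by
      refine (Finset.sum_le_card_nsmul _ _ _ fun i _ => h2 i).trans ?_
      rw [nsmul_eq_mul, Finset.card_univ]
    calc _ ≤ s * (∑ i, energyOn φ (Z i) : ℝ) := by
          rw [Finset.card_univ] at h1
          rw [hs]
          exact_mod_cast h1
      _ ≤ s * (s * (E / W.card)) := mul_le_mul_of_nonneg_left h3 (by positivity)
      _ = _ := by ring
  have hDle : (energyOn φ (offd.biUnion D) : ℝ) ≤
      s ^ 4 * ((1 / (6 * s ^ 2)) ^ 2 * E + C * √E) := by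
    set R := (1 / (6 * s ^ 2)) ^ 2 * E + C * √E with hR
    have hR0 : 0 ≤ R := by positivity
    have h1 := energyOn_le_of_subset_biUnion φ _ offd D (Finset.Subset.refl _)
    have h2 : ∀ ij ∈ offd, (energyOn φ (D ij) : ℝ) ≤ R := fun ij hij => by
      have h3 := energyOn_eq_coord_le ψ W (i := ij.1) (j := ij.2)
        (by simpa [hoffd] using hij) (η := 1 / (6 * s ^ 2)) (by positivity)
      simpa [hR, hC] using h3
    have h3 : (∑ ij ∈ offd, energyOn φ (D ij) : ℝ) ≤ offd.card * R := by
      refine (Finset.sum_le_card_nsmul _ _ _ h2).trans ?_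
      rw [nsmul_eq_mul]
    have h4 : (offd.card : ℝ) ≤ s ^ 2 := by
      have : offd.card ≤ Fintype.card ι ^ 2 := by
        rw [hoffd, Finset.offDiag_card, Finset.card_univ, sq]
        exact Nat.sub_le _ _
      rw [hs]
      exact_mod_cast this
    calc _ ≤ offd.card * (∑ ij ∈ offd, energyOn φ (D ij) : ℝ) := by exact_mod_cast h1
      _ ≤ offd.card * (offd.card * R) := mul_le_mul_of_nonneg_left h3 (by positivity)
      _ ≤ s ^ 2 * (s ^ 2 * R) := by gcongr
      _ = _ := by ring
  have hgoodle : (energyOn φ (P.biUnion good) : ℝ) ≤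
      P.card * ∑ p ∈ P, (energyOn φ (good p) : ℝ) := by
    exact_mod_cast energyOn_le_of_subset_biUnion φ _ P good (Finset.Subset.refl _)
  have hsplit : E ≤ 3 * (energyOn φ (P.biUnion good) + energyOn φ (Finset.univ.biUnion Z) +
      energyOn φ (offd.biUnion D)) := by
    have h1 := energyOn_le_of_subset_biUnion φ A Finset.univ piece (by
      intro x hx
      rw [Finset.mem_biUnion]
      rcases hcover x hx with ⟨i, hi⟩ | ⟨i, j, hij, hx'⟩ | ⟨p, hp, hx'⟩
      · exact ⟨1, Finset.mem_univ _, Finset.mem_biUnion.mpr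
          ⟨i, Finset.mem_univ _, Finset.mem_filter.mpr ⟨hx, hi⟩⟩⟩
      · exact ⟨2, Finset.mem_univ _, Finset.mem_biUnion.mpr
          ⟨(i, j), by simpa [hoffd] using hij, Finset.mem_filter.mpr ⟨hx, hx'⟩⟩⟩
      · exact ⟨0, Finset.mem_univ _, Finset.mem_biUnion.mpr ⟨p, hp, hx'⟩⟩)
    rw [Fin.sum_univ_three, Finset.card_univ, Fintype.card_fin] at h1
    rw [hE]
    exact_mod_cast h1
  have h1 : 3 * (s ^ 2 * (E / W.card)) ≤ E / 4 := by
    have h12 : 12 * s ^ 2 ≤ W.card := le_trans (le_add_of_nonneg_right (by positivity)) hW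
    have : 3 * (s ^ 2 * (E / W.card)) = (12 * s ^ 2) * E / W.card / 4 := by ring
    rw [this]
    refine div_le_div_of_nonneg_right ?_ (by norm_num)
    rw [div_le_iff₀ hWpos, mul_comm E]
    exact mul_le_mul_of_nonneg_right h12 hEpos.le
  have h2 : 3 * (s ^ 4 * ((1 / (6 * s ^ 2)) ^ 2 * E)) = E / 12 := by
    field_simp
    norm_num
  have h3 : 3 * (s ^ 4 * (C * √E)) ≤ E / 4 := by
    have h12 : 12 * s ^ 4 * C ≤ √E := by
      refine Real.le_sqrt_of_sq_le ?_
      exact (le_trans (le_add_of_nonneg_left (by positivity)) hW).trans hWE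
    have h5 : √E * √E = E := Real.mul_self_sqrt hEpos.le
    nlinarith [Real.sqrt_nonneg E]
  have hmain : E ≤ 12 * (P.card * ∑ p ∈ P, (energyOn φ (good p) : ℝ)) := by
    nlinarith
  have hPne : P.Nonempty := by
    by_contra h
    rw [Finset.not_nonempty_iff_eq_empty] at h
    simp [h] at hmain
    linarith
  obtain ⟨p, hp, hmax⟩ := P.exists_max_image (fun p => energyOn φ (good p)) hPne
  have hfinal : E ≤ 12 * (P.card : ℝ) ^ 2 * energyOn φ (good p) := by
    refine hmain.trans ?_
    have : ∑ p ∈ P, (energyOn φ (good p) : ℝ) ≤ P.card * energyOn φ (good p) := by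
      rw [← nsmul_eq_mul]
      exact Finset.sum_le_card_nsmul _ _ _ fun c hc => by exact_mod_cast hmax c hc
    have h5 := mul_le_mul_of_nonneg_left this (Nat.cast_nonneg (α := ℝ) P.card)
    nlinarith
  refine ⟨p, hp, ?_, hfinal⟩
  by_contra h
  rw [Finset.not_nonempty_iff_eq_empty] at h
  rw [h] at hfinal
  simp [energyOn] at hfinal
  linarith

end Decomposition

section Sizes

lemma prod_rpow_telescope (n : ℕ) {X : ℝ} (hX : 0 < X) :
    ∏ i : Fin n, X ^ ((1 : ℝ) / ((((i : ℕ) : ℝ) + 1) * (((i : ℕ) : ℝ) + 2))) =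
      X ^ ((n : ℝ) / (n + 1)) := by
  induction n with
  | zero => simp
  | succ n ih =>
    rw [Fin.prod_univ_castSucc]
    simp only [Fin.val_castSucc, Fin.val_last]
    rw [ih, ← Real.rpow_add hX]
    congr 1
    push_cast
    have h1 : (n : ℝ) + 1 ≠ 0 := by positivity
    have h2 : (n : ℝ) + 2 ≠ 0 := by positivity
    have h3 : (n : ℝ) + 1 + 1 ≠ 0 := by positivity
    field_simp
    ring

lemma exists_prime_not_dvd {n k r q : ℕ} (hk : n + 1 ≤ k) (hq : 0 < q) {b : ℤ} (hb : 0 ≤ b)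
    (x : Fin (n + 1 + r) → ℤ) (hx : Function.Injective x) (hpos : ∀ i, 0 < x i) (B : ℤ)
    (hB : ∀ i, q * x i + b ≤ B) (P : Finset ℕ) (hP : ∀ p ∈ P, p.Prime)
    (hprod : (n + 1).factorial * B ^ ((k - 1) * (n + 1)) * q * B ^ (n + 1 + r) <
      ((∏ p ∈ P, p : ℕ) : ℤ)) :
    ∃ p ∈ P, ¬ (p : ℤ) ∣ q ∧ (∀ i, ¬ (p : ℤ) ∣ q * x i + b) ∧
      ¬ (p : ℤ) ∣ (jacMatrix n k fun i => q * x (Fin.castAdd r i) + b).det := by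
  have hq' : (0 : ℤ) < q := by exact_mod_cast hq
  have hz : ∀ i, 0 < q * x i + b := fun i => by nlinarith [mul_pos hq' (hpos i)]
  have hB1 : 1 ≤ B := by
    have := hz ⟨0, by omega⟩
    have := hB ⟨0, by omega⟩
    linarith
  set Δ := (jacMatrix n k fun i => q * x (Fin.castAdd r i) + b).det with hΔ
  set N : ℤ := |Δ| * q * ∏ i, (q * x i + b) with hN
  have hΔ0 : Δ ≠ 0 := by
    refine det_pow_ne_zero (jacExp n k) (jacExp_injective hk) _ (fun i j h => ?_) fun i => hz _
    have h1 : (q : ℤ) * x (Fin.castAdd r i) = q * x (Fin.castAdd r j) := by simpa using h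
    exact Fin.castAdd_injective _ _ (hx (mul_left_cancel₀ hq'.ne' h1))
  have hNpos : 0 < N :=
    mul_pos (mul_pos (abs_pos.mpr hΔ0) hq') (Finset.prod_pos fun i _ => hz i)
  have hNle : N ≤ (n + 1).factorial * B ^ ((k - 1) * (n + 1)) * q * B ^ (n + 1 + r) := by
    have h1 : |Δ| ≤ (n + 1).factorial * B ^ ((k - 1) * (n + 1)) :=
      abs_det_pow_le (jacExp n k) _ B hB1 (k - 1) (jacExp_le hk) fun i => by
        rw [abs_of_pos (hz _)]
        exact hB _
    have h2 : ∏ i, (q * x i + b) ≤ B ^ (n + 1 + r) := by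
      refine (Finset.prod_le_prod (fun i _ => (hz i).le) fun i _ => hB i).trans ?_
      simp
    have h3 : 0 ≤ ∏ i, (q * x i + b) := Finset.prod_nonneg fun i _ => (hz i).le
    rw [hN]
    gcongr
  by_contra hcon
  push Not at hcon
  have hdvd : ∀ p ∈ P, p ∣ N.natAbs := by
    intro p hp
    rw [← Int.natCast_dvd]
    by_cases h1 : (p : ℤ) ∣ q
    · exact (h1.mul_left _).mul_right _
    by_cases h2 : ∀ i, ¬ (p : ℤ) ∣ q * x i + b
    · exact (((dvd_abs _ _).mpr (hcon p hp h1 h2)).mul_right _).mul_right _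
    · push Not at h2
      obtain ⟨i, hi⟩ := h2
      exact (hi.trans (Finset.dvd_prod_of_mem (fun i => q * x i + b) (Finset.mem_univ i))).mul_left _
  have h1 : ∏ p ∈ P, p ∣ N.natAbs :=
    Finset.prod_primes_dvd _ (fun p hp => (hP p hp).prime) hdvd
  have h2 := Nat.le_of_dvd (Int.natAbs_pos.mpr hNpos.ne') h1
  have h3 : ((∏ p ∈ P, p : ℕ) : ℤ) ≤ N := by
    rw [← abs_of_pos hNpos, Int.abs_eq_natAbs]
    exact_mod_cast h2
  linarith

lemma isCoprime_choose_of_lt {k m N : ℕ} (hmk : m ≤ k)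
    (h : ∀ p : ℕ, p.Prime → p ∣ N → k < p) : IsCoprime (k.choose m : ℤ) (N : ℤ) := by
  rw [Nat.isCoprime_iff_coprime]
  refine Nat.Coprime.coprime_dvd_left (m := k.choose m) (k := k.factorial)
    ⟨m.factorial * (k - m).factorial, ?_⟩ (Nat.coprime_of_dvd fun p hp h1 h2 => ?_)
  · rw [← mul_assoc, Nat.choose_mul_factorial_mul_factorial hmk]
  · have := (hp.dvd_factorial).mp h1
    have := h p hp h2
    omega

lemma div_le_pow_of_le {n : ℕ} {X Y s q : ℝ} (hY : 1 ≤ Y) (hs : 1 ≤ s)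
    (hX : X = Y ^ ((n + 1) * (n + 2))) (hq : s ^ n * Y ^ (n * (n + 2)) ≤ q) :
    X / q ≤ Y ^ (n + 2) := by
  have hqpos : 0 < q := lt_of_lt_of_le (by positivity) hq
  rw [div_le_iff₀ hqpos, hX]
  have h1 : Y ^ ((n + 1) * (n + 2)) = Y ^ (n + 2) * Y ^ (n * (n + 2)) := by
    rw [← pow_add]
    congr 1
    ring
  rw [h1]
  refine mul_le_mul_of_nonneg_left (le_trans ?_ hq) (by positivity)
  exact le_mul_of_one_le_left (by positivity) (one_le_pow₀ hs)

lemma two_mul_div_pow_lt {n : ℕ} {X Y s q p r : ℝ} (hY : 1 ≤ Y) (hs : 2 ≤ s) (hr : r < s)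
    (hX : X = Y ^ ((n + 1) * (n + 2))) (hq : s ^ n * Y ^ (n * (n + 2)) ≤ q) (hp : s * Y < p) :
    2 * r * (X / (p * q)) ^ (n + 1) < p * q := by
  have hqpos : 0 < q := lt_of_lt_of_le (by positivity) hq
  have hppos : 0 < p := lt_trans (by positivity) hp
  have hX0 : 0 < X := by rw [hX]; positivity
  have hpq : s ^ (n + 1) * Y ^ ((n + 1) ^ 2) < p * q := by
    calc s ^ (n + 1) * Y ^ ((n + 1) ^ 2) = (s * Y) * (s ^ n * Y ^ (n * (n + 2))) := by
          have : (n + 1) ^ 2 = n * (n + 2) + 1 := by ring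
          rw [this]
          ring
      _ ≤ (s * Y) * q := mul_le_mul_of_nonneg_left hq (by positivity)
      _ < p * q := mul_lt_mul_of_pos_right hp hqpos
  have hdiv' : s * (X / (p * q)) ≤ Y ^ (n + 1) := by
    rw [← mul_div_assoc, div_le_iff₀ (by positivity), hX]
    have h1 : Y ^ ((n + 1) * (n + 2)) = Y ^ (n + 1) * Y ^ ((n + 1) ^ 2) := by
      rw [← pow_add]
      congr 1
      ring
    rw [h1]
    have h2 : s * Y ^ ((n + 1) ^ 2) ≤ p * q := by
      refine le_trans ?_ hpq.le
      exact mul_le_mul_of_nonneg_right (le_self_pow₀ (by linarith) (by omega)) (by positivity)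
    nlinarith [pow_pos (lt_of_lt_of_le one_pos hY) (n + 1)]
  set D := X / (p * q) with hD
  have hD0 : 0 ≤ D := by positivity
  have h3 : s * D ^ (n + 1) ≤ Y ^ ((n + 1) ^ 2) := by
    calc s * D ^ (n + 1) = (s * D) * D ^ n := by ring
      _ ≤ Y ^ (n + 1) * (Y ^ (n + 1)) ^ n := by
        have h6 : D ≤ Y ^ (n + 1) := by nlinarith
        gcongr
      _ = Y ^ ((n + 1) ^ 2) := by
        rw [← pow_mul, ← pow_add]
        congr 1
        ring
  have h4 : 2 * r * D ^ (n + 1) ≤ 2 * (s * D ^ (n + 1)) := by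
    have := mul_le_mul_of_nonneg_right hr.le (pow_nonneg hD0 (n + 1))
    linarith
  have h5 : 2 * Y ^ ((n + 1) ^ 2) ≤ s ^ (n + 1) * Y ^ ((n + 1) ^ 2) :=
    mul_le_mul_of_nonneg_right (hs.trans (le_self_pow₀ (by linarith) (by omega))) (by positivity)
  linarith

end Sizes

section Assembly

lemma rpow_one_div_natPow {n : ℕ} {X : ℝ} (hX : 0 ≤ X) :
    (X ^ ((1 : ℝ) / (((n + 1 : ℕ) : ℝ) * (((n + 1 : ℕ) : ℝ) + 1)))) ^ ((n + 1) * (n + 2)) = X := by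
  rw [← Real.rpow_natCast, ← Real.rpow_mul hX]
  have h1 : (n : ℝ) + 1 ≠ 0 := by positivity
  have h2 : (n : ℝ) + 2 ≠ 0 := by positivity
  have h3 : (n : ℝ) + 1 + 1 ≠ 0 := by positivity
  have : (1 : ℝ) / (((n + 1 : ℕ) : ℝ) * (((n + 1 : ℕ) : ℝ) + 1)) *
      (((n + 1) * (n + 2) : ℕ) : ℝ) = 1 := by
    push_cast
    field_simp
    ring
  rw [this, Real.rpow_one]

/-- Size of `q = ∏ pr i` when `pr i` lies in `(c X ^ (1/((i+1)(i+2))), 2 c X ^ (1/((i+1)(i+2)))]`. -/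
lemma prod_mem_Icc_of_mem_intervals {n : ℕ} {c X Y : ℝ} (hc : 0 ≤ c) (hY : 1 ≤ Y)
    (hX : X = Y ^ ((n + 1) * (n + 2))) (pr : Fin n → ℕ)
    (hpr : ∀ i : Fin n, c * X ^ ((1 : ℝ) / ((((i : ℕ) : ℝ) + 1) * (((i : ℕ) : ℝ) + 2))) < pr i ∧
      (pr i : ℝ) ≤ 2 * c * X ^ ((1 : ℝ) / ((((i : ℕ) : ℝ) + 1) * (((i : ℕ) : ℝ) + 2)))) :
    c ^ n * Y ^ (n * (n + 2)) ≤ ((∏ i, pr i : ℕ) : ℝ) ∧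
      ((∏ i, pr i : ℕ) : ℝ) ≤ (2 * c) ^ n * Y ^ (n * (n + 2)) := by
  have hY0 : 0 < Y := by linarith
  have hX0 : 0 < X := by rw [hX]; positivity
  have htel : ∏ i : Fin n, X ^ ((1 : ℝ) / ((((i : ℕ) : ℝ) + 1) * (((i : ℕ) : ℝ) + 2))) =
      Y ^ (n * (n + 2)) := by
    rw [prod_rpow_telescope n hX0, hX, ← Real.rpow_natCast, ← Real.rpow_natCast,
      ← Real.rpow_mul hY0.le]
    congr 1
    have h1 : (n : ℝ) + 1 ≠ 0 := by positivity
    push_cast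
    field_simp
  have hfac (d : ℝ) : ∏ i : Fin n, (d * X ^ ((1 : ℝ) / ((((i : ℕ) : ℝ) + 1) *
      (((i : ℕ) : ℝ) + 2)))) = d ^ n * Y ^ (n * (n + 2)) := by
    rw [Finset.prod_mul_distrib, htel]
    simp
  rw [← hfac, ← hfac, Nat.cast_prod]
  exact ⟨Finset.prod_le_prod (fun i _ => by positivity) fun i _ => (hpr i).1.le,
    Finset.prod_le_prod (fun i _ => by positivity) fun i _ => (hpr i).2⟩

/-- A set of `2 s k ^ 4` primes exceeding `Y` has product exceeding the discriminant quantity. -/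
lemma factorial_mul_pow_lt_prod {n k s : ℕ} (hk : n + 2 ≤ k) (hk3 : 3 ≤ k) (hs : 2 ≤ s)
    {X Y : ℝ} (hY : 1 ≤ Y) (hX : X = Y ^ ((n + 1) * (n + 2)))
    (hbig : ((n + 1).factorial : ℝ) * 2 ^ ((k - 1) * (n + 1) + 1 + s) < Y)
    {q : ℕ} (hq : (q : ℝ) ≤ X) {B : ℤ} (hB0 : 0 ≤ B) (hB : (B : ℝ) ≤ 2 * X)
    (P : Finset ℕ) (hcard : P.card = 2 * s * k ^ 4) (hP : ∀ p ∈ P, Y ≤ (p : ℝ)) :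
    ((n + 1).factorial : ℤ) * B ^ ((k - 1) * (n + 1)) * q * B ^ s < ((∏ p ∈ P, p : ℕ) : ℤ) := by
  have hY0 : 0 < Y := by linarith
  have hX1 : 1 ≤ X := by rw [hX]; exact one_le_pow₀ hY
  have hX0 : 0 < X := by linarith
  have hYX : Y ≤ X := by rw [hX]; exact le_self_pow₀ hY (by positivity)
  have hB0' : (0 : ℝ) ≤ B := by exact_mod_cast hB0
  have h1 : ((n + 1).factorial : ℝ) * (B : ℝ) ^ ((k - 1) * (n + 1)) * q * (B : ℝ) ^ s ≤
      ((n + 1).factorial : ℝ) * (2 * X) ^ ((k - 1) * (n + 1) + 1 + s) := by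
    rw [pow_add, pow_add, pow_one, mul_assoc, mul_assoc, mul_assoc ((2 * X) ^ _)]
    gcongr
    linarith
  have h2 : ((n + 1).factorial : ℝ) * (2 * X) ^ ((k - 1) * (n + 1) + 1 + s) <
      X ^ ((k - 1) * (n + 1) + 1 + s + 1) := by
    rw [mul_pow, ← mul_assoc, pow_succ' X]
    gcongr
    linarith
  have hexp : (k - 1) * (n + 1) + 1 + s + 1 ≤ 2 * s * k ^ 2 := by
    have e1 : (k - 1) * (n + 1) ≤ s * k ^ 2 := by
      calc (k - 1) * (n + 1) ≤ k * k := Nat.mul_le_mul (by omega) (by omega)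
        _ ≤ s * k ^ 2 := by nlinarith [Nat.zero_le (k ^ 2)]
    have e2 : s * 9 ≤ s * k ^ 2 := Nat.mul_le_mul_left s (by nlinarith)
    have e3 : 2 * s * k ^ 2 = s * k ^ 2 + s * k ^ 2 := by ring
    omega
  have hexp2 : (n + 1) * (n + 2) ≤ k ^ 2 := by
    rw [sq]
    exact Nat.mul_le_mul (by omega) hk
  have h3 : X ^ ((k - 1) * (n + 1) + 1 + s + 1) ≤ Y ^ (2 * s * k ^ 4) := by
    calc X ^ ((k - 1) * (n + 1) + 1 + s + 1) ≤ X ^ (2 * s * k ^ 2) := by gcongr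
      _ = Y ^ ((n + 1) * (n + 2) * (2 * s * k ^ 2)) := by rw [hX, ← pow_mul]
      _ ≤ Y ^ (k ^ 2 * (2 * s * k ^ 2)) := by gcongr
      _ = Y ^ (2 * s * k ^ 4) := by congr 1; ring
  have h4 : Y ^ (2 * s * k ^ 4) ≤ ∏ p ∈ P, (p : ℝ) := by
    rw [← hcard, ← Finset.prod_const]
    exact Finset.prod_le_prod (fun i _ => hY0.le) hP
  have : ((n + 1).factorial : ℝ) * (B : ℝ) ^ ((k - 1) * (n + 1)) * q * (B : ℝ) ^ s <
      ((∏ p ∈ P, p : ℕ) : ℝ) := by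
    rw [Nat.cast_prod]
    linarith
  exact_mod_cast this

lemma le_card_intBox {X : ℝ} {q : ℕ} (hX : 0 ≤ X) : X / q ≤ (intBox X q).card := by
  have h0 : 0 ≤ ⌊X / q⌋ := Int.floor_nonneg.2 (by positivity)
  have h1 : ((intBox X q).card : ℤ) = ⌊X / q⌋ + 1 := by
    simp only [intBox, Int.card_Icc]
    omega
  have h2 : ((intBox X q).card : ℝ) = (⌊X / q⌋ : ℝ) + 1 := by exact_mod_cast h1
  rw [h2]
  exact (Int.lt_floor_add_one _).le

end Assembly

section Core

/-- The main estimate with `m = n + 1` and `s = n + 1 + r`. -/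
lemma exists_Icount_le (n k r : ℕ) (hk : n + 2 ≤ k) (hk3 : 3 ≤ k) (hr : 1 ≤ r) :
    ∃ C : ℝ, 0 < C ∧ ∃ X₀ : ℝ, ∀ X : ℝ, X₀ ≤ X → ∀ pr : Fin n → ℕ,
      (∀ i : Fin n, (pr i).Prime ∧
        ((n + 1 + r : ℕ) : ℝ) * X ^ ((1 : ℝ) / ((((i : ℕ) : ℝ) + 1) * (((i : ℕ) : ℝ) + 2))) <
          (pr i : ℝ) ∧
        (pr i : ℝ) ≤ 2 * ((n + 1 + r : ℕ) : ℝ) *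
          X ^ ((1 : ℝ) / ((((i : ℕ) : ℝ) + 1) * (((i : ℕ) : ℝ) + 2)))) →
    ∀ P : Finset ℕ, P.card = 2 * (n + 1 + r) * k ^ 4 →
      (∀ p ∈ P, p.Prime ∧ ((n + 1 + r : ℕ) : ℝ) *
        X ^ ((1 : ℝ) / (((n + 1 : ℕ) : ℝ) * (((n + 1 : ℕ) : ℝ) + 1))) < (p : ℝ)) →
    ∀ b : ℤ, 0 ≤ b → b < ((∏ i, pr i : ℕ) : ℤ) → IsCoprime b ((∏ i, pr i : ℕ) : ℤ) →
    ∃ p ∈ P, ∃ a : ℤ, 0 ≤ a ∧ a < (p : ℤ) ∧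
      IsCoprime (b + a * ((∏ i, pr i : ℕ) : ℤ)) ((p : ℤ) * ((∏ i, pr i : ℕ) : ℤ)) ∧
      (Icount (n + 1 + r) k (n + 1) X (∏ i, pr i) b : ℝ) ≤
        C * (p : ℝ) ^ (2 * r + (n + 1) * (n + 2) / 2 + (n + 1) * (n + 2)) *
          (Icount r k (n + 2) X (p * ∏ i, pr i) (b + a * ((∏ i, pr i : ℕ) : ℤ)) : ℝ) := by
  obtain ⟨C₀, hC₀⟩ := exists_energyOn_nonsingular_le n k (by omega)
  set s := n + 1 + r with hs
  set W₀ : ℝ := 12 * (s : ℝ) ^ 2 + (12 * (s : ℝ) ^ 4 * (6 * (s : ℝ) ^ 2) ^ (s - 2)) ^ 2 with hW₀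
  have hW₀0 : 0 ≤ W₀ := by positivity
  set F : ℝ := ((n + 1).factorial : ℝ) * 2 ^ ((k - 1) * (n + 1) + 1 + s) with hF
  have hF0 : 0 ≤ F := by positivity
  set Y₀ : ℝ := 1 + k + (2 * (s : ℝ)) ^ n * (1 + W₀) + F with hY₀
  have hE0 : 0 ≤ (2 * (s : ℝ)) ^ n := by positivity
  have hE1 : 0 ≤ (2 * (s : ℝ)) ^ n * W₀ := by positivity
  have hk0 : (0 : ℝ) ≤ k := by positivity
  have hY₀1 : 1 ≤ Y₀ := by rw [hY₀]; linarith
  have hs2 : (2 : ℝ) ≤ s := by exact_mod_cast (by omega : 2 ≤ s)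
  refine ⟨12 * ((2 * s * k ^ 4 : ℕ) : ℝ) ^ 2 * (C₀ + 1), by positivity,
    Y₀ ^ ((n + 1) * (n + 2)), ?_⟩
  intro X hX₀ pr hpr P hPcard hP b hb0 hbq hbcop
  have hX1 : 1 ≤ X := (one_le_pow₀ hY₀1).trans hX₀
  have hX0 : 0 < X := by linarith
  set Y : ℝ := X ^ ((1 : ℝ) / (((n + 1 : ℕ) : ℝ) * (((n + 1 : ℕ) : ℝ) + 1))) with hYdef
  have hYX : X = Y ^ ((n + 1) * (n + 2)) := (rpow_one_div_natPow hX0.le).symm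
  have hYnn : 0 ≤ Y := Real.rpow_nonneg hX0.le _
  have hYY₀ : Y₀ ≤ Y := by
    rw [hYX] at hX₀
    exact le_of_pow_le_pow_left₀ (by positivity) hYnn hX₀
  have hY1 : 1 ≤ Y := hY₀1.trans hYY₀
  have hkY : (k : ℝ) < Y := by rw [hY₀] at hYY₀; linarith
  have hFY : F < Y := by rw [hY₀] at hYY₀; linarith
  have hEY : (2 * (s : ℝ)) ^ n * (1 + W₀) ≤ Y := by rw [hY₀] at hYY₀; linarith
  have hsY : Y ≤ s * Y := by nlinarith
  have hpY : ∀ p ∈ P, Y < (p : ℝ) := fun p hp => hsY.trans_lt (hP p hp).2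
  have hprY : ∀ i, Y < (pr i : ℝ) := by
    intro i
    have hexp : (1 : ℝ) / (((n + 1 : ℕ) : ℝ) * (((n + 1 : ℕ) : ℝ) + 1)) ≤
        (1 : ℝ) / ((((i : ℕ) : ℝ) + 1) * (((i : ℕ) : ℝ) + 2)) := by
      have hi : ((i : ℕ) : ℝ) ≤ n := by exact_mod_cast i.2.le
      push_cast
      apply one_div_le_one_div_of_le (by positivity)
      exact mul_le_mul (by linarith) (by linarith) (by positivity) (by positivity)
    have h1 := Real.rpow_le_rpow_of_exponent_le hX1 hexp
    have h2 := (hpr i).2.1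
    have h3 : (0 : ℝ) ≤ s := by linarith
    calc Y ≤ s * Y := hsY
      _ ≤ _ := mul_le_mul_of_nonneg_left h1 h3
      _ < _ := h2
  obtain ⟨hqlow, hqup⟩ := prod_mem_Icc_of_mem_intervals (by positivity) hY1 hYX pr
    fun i => (hpr i).2
  have hq0 : 0 < ∏ i, pr i := Finset.prod_pos fun i _ => (hpr i).1.pos
  have hqprime : ∀ ℓ : ℕ, ℓ.Prime → ℓ ∣ ∏ i, pr i → k < ℓ := by
    intro ℓ hℓ hdvd
    obtain ⟨i, -, hi⟩ := (hℓ.prime.dvd_finsetProd_iff _).1 hdvd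
    rw [(Nat.prime_dvd_prime_iff_eq hℓ (hpr i).1).1 hi]
    exact_mod_cast hkY.trans (hprY i)
  set q := ∏ i, pr i with hq
  have hq0' : (0 : ℝ) < q := by exact_mod_cast hq0
  have hYpow : Y ≤ Y ^ (n + 2) := le_self_pow₀ hY1 (by omega)
  have hXsplit : X = Y ^ (n * (n + 2)) * Y ^ (n + 2) := by
    rw [hYX, ← pow_add]
    congr 1
    ring
  have hqX : q * (1 + W₀) ≤ X := by
    calc (q : ℝ) * (1 + W₀) ≤ (2 * (s : ℝ)) ^ n * Y ^ (n * (n + 2)) * (1 + W₀) := by gcongr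
      _ = Y ^ (n * (n + 2)) * ((2 * (s : ℝ)) ^ n * (1 + W₀)) := by ring
      _ ≤ Y ^ (n * (n + 2)) * Y ^ (n + 2) := by gcongr; exact hEY.trans hYpow
      _ = X := hXsplit.symm
  have hqX' : (q : ℝ) ≤ X := by nlinarith
  set good : ℕ → Finset (Fin s → ℤ) := fun p =>
    (Fintype.piFinset fun _ : Fin s => intBox X q).filter fun x =>
      ¬ (p : ℤ) ∣ q ∧ (∀ i, ¬ (p : ℤ) ∣ q * x i + b) ∧
        ¬ (p : ℤ) ∣ (jacMatrix n k fun i => q * x (Fin.castAdd r i) + b).det with hgood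
  have hcover : ∀ x ∈ Fintype.piFinset fun _ : Fin s => intBox X q,
      (∃ i, x i = 0) ∨ (∃ i j, i ≠ j ∧ x i = x j) ∨ ∃ p ∈ P, x ∈ good p := by
    intro x hx
    by_cases hz : ∃ i, x i = 0
    · exact Or.inl hz
    by_cases hd : ∃ i j, i ≠ j ∧ x i = x j
    · exact Or.inr (Or.inl hd)
    refine Or.inr (Or.inr ?_)
    push Not at hz hd
    have hxm : ∀ i, 0 ≤ x i ∧ (x i : ℝ) ≤ X / q := fun i =>
      mem_intBox.1 (Fintype.mem_piFinset.1 hx i)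
    have hbound : ∀ i, (q : ℤ) * x i + b ≤ ⌊2 * X⌋ := by
      intro i
      rw [Int.le_floor]
      push_cast
      have h1 : (q : ℝ) * x i ≤ X := by
        have := (le_div_iff₀ hq0').1 (hxm i).2
        linarith
      have h2 : (b : ℝ) < q := by exact_mod_cast hbq
      linarith
    obtain ⟨p, hp, h⟩ := exists_prime_not_dvd (r := r) (by omega : n + 1 ≤ k) hq0 hb0 x
      (fun i j hij => by_contra fun hne => hd i j hne hij)
      (fun i => lt_of_le_of_ne (hxm i).1 (Ne.symm (hz i))) ⌊2 * X⌋ hbound P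
      (fun p hp => (hP p hp).1)
      (factorial_mul_pow_lt_prod hk hk3 (by omega) hY1 hYX hFY hqX'
        (Int.floor_nonneg.2 (by linarith)) (Int.floor_le _) P hPcard fun p hp => (hpY p hp).le)
    exact ⟨p, hp, Finset.mem_filter.2 ⟨hx, h⟩⟩
  have hWcard : 12 * (Fintype.card (Fin s) : ℝ) ^ 2 + (12 * (Fintype.card (Fin s) : ℝ) ^ 4 *
      (6 * (Fintype.card (Fin s) : ℝ) ^ 2) ^ (Fintype.card (Fin s) - 2)) ^ 2 ≤
      (intBox X q).card := by
    rw [Fintype.card_fin]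
    refine le_trans ?_ (le_card_intBox hX0.le)
    rw [le_div_iff₀ hq0']
    nlinarith
  have : Nonempty (Fin s) := ⟨⟨0, by omega⟩⟩
  obtain ⟨p, hp, hne, hle⟩ := exists_energyOn_le_of_cover (sysVec k (n + 1) q b) (intBox X q) P
    good hcover hWcard
  have hpp := (hP p hp).1
  have hkp : k < p := by exact_mod_cast hkY.trans (hpY p hp)
  have hpq : ¬ (p : ℤ) ∣ q := by
    obtain ⟨x, hx⟩ := hne
    exact (Finset.mem_filter.1 hx).2.1
  have hchoose : IsCoprime (k.choose (n + 1) : ℤ) ((p : ℤ) * q) := by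
    rw [← Nat.cast_mul]
    refine isCoprime_choose_of_lt (by omega) fun ℓ hℓ hdvd => ?_
    rcases (Nat.Prime.dvd_mul hℓ).1 hdvd with h | h
    · rwa [(Nat.prime_dvd_prime_iff_eq hℓ hpp).1 h]
    · exact hqprime ℓ hℓ h
  have hs1 : (1 : ℝ) ≤ s := by linarith
  have hsmall : 2 * (r : ℤ) * ⌊X / (p * q : ℕ)⌋ ^ (n + 1) < (p * q : ℕ) := by
    have h := two_mul_div_pow_lt (r := (r : ℝ)) hY1 hs2
      (by exact_mod_cast (by omega : r < s)) hYX hqlow (hP p hp).2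
    have hfl : (⌊X / (p * q : ℕ)⌋ : ℝ) ≤ X / (p * q) := by
      have := Int.floor_le (X / (p * q : ℕ))
      push_cast at this ⊢
      exact this
    have hf0 : (0 : ℝ) ≤ ⌊X / (p * q : ℕ)⌋ := by
      exact_mod_cast Int.floor_nonneg.2 (by positivity : 0 ≤ X / (p * q : ℕ))
    have : 2 * (r : ℝ) * (⌊X / (p * q : ℕ)⌋ : ℝ) ^ (n + 1) < p * q := by
      refine lt_of_le_of_lt ?_ h
      gcongr
    exact_mod_cast this
  have hlarge : ⌊X / q⌋ < (p : ℤ) ^ (n + 2) := by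
    have h1 : (⌊X / q⌋ : ℝ) < (p : ℝ) ^ (n + 2) :=
      calc (⌊X / q⌋ : ℝ) ≤ X / q := Int.floor_le _
        _ ≤ Y ^ (n + 2) := div_le_pow_of_le hY1 hs1 hYX hqlow
        _ < (p : ℝ) ^ (n + 2) := pow_lt_pow_left₀ (hpY p hp) hYnn (by omega)
    exact_mod_cast h1
  obtain ⟨a, ha0, hap, hacop, hmain⟩ := hC₀ p q r X b (good p) hpp hkp hq0 hpq hr hbcop hchoose
    hsmall hlarge (fun x hx => by
      obtain ⟨hx1, -, hx2, hx3⟩ := Finset.mem_filter.1 hx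
      exact ⟨Fintype.mem_piFinset.1 hx1, hx2, hx3⟩) hne
  refine ⟨p, hp, a, ha0, hap, hacop, ?_⟩
  rw [Icount_eq_energyOn _ _ _ (by omega)]
  set J : ℝ := (Icount r k (n + 2) X (p * q) (b + a * q) : ℝ) with hJ
  have hJ0 : 0 ≤ J := by positivity
  calc _ ≤ 12 * (P.card : ℝ) ^ 2 * _ := hle
    _ ≤ 12 * (P.card : ℝ) ^ 2 * ((p : ℝ) ^ (2 * r) * (J * (C₀ *
        (p : ℝ) ^ ((n + 1) * (n + 2) / 2) * (p : ℝ) ^ ((n + 1) * (n + 2))))) :=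
      mul_le_mul_of_nonneg_left hmain (mul_nonneg (by norm_num) (sq_nonneg _))
    _ = 12 * ((2 * s * k ^ 4 : ℕ) : ℝ) ^ 2 * C₀ *
        (p : ℝ) ^ (2 * r + (n + 1) * (n + 2) / 2 + (n + 1) * (n + 2)) * J := by
      rw [hPcard, pow_add, pow_add]
      ring
    _ ≤ _ := by
      gcongr
      linarith

end Core

/-- Lemma 8.3: with q = p_1 ⋯ p_{m-1}, p_i ∈ Y_i, 𝒫_m a set of 2sk⁴ primes of Y_m,
and 0 ≤ b < q with (b,q) = 1, one has
I_{s,m}(X;q,b) ≤ C max_{p ∈ 𝒫_m} p^{2s-2m+3m(m+1)/2} max_{a ∈ ℬ(p)}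
I_{s-m,m+1}(X;pq,b+aq), where ℬ(p) = {a : 0 ≤ a < p, (b+aq,pq) = 1}; here
Y_i consists of the primes in (s X^{1/(i(i+1))}, 2s X^{1/(i(i+1))}]. -/
theorem lemma8_3 (k s m : ℕ) (hk : 3 ≤ k) (hm1 : 1 ≤ m) (hmk : m ≤ k - 1)
    (hsm : m < s) :
    ∃ C : ℝ, 0 < C ∧ ∃ X₀ : ℝ, ∀ X : ℝ, X₀ ≤ X →
    ∀ pr : Fin (m-1) → ℕ,
      (∀ i : Fin (m-1), (pr i).Prime ∧
        (s:ℝ) * X ^ ((1:ℝ)/((((i:ℕ):ℝ)+1)*(((i:ℕ):ℝ)+2))) < (pr i : ℝ) ∧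
        (pr i : ℝ) ≤ 2*(s:ℝ) * X ^ ((1:ℝ)/((((i:ℕ):ℝ)+1)*(((i:ℕ):ℝ)+2)))) →
    ∀ P : Finset ℕ, P.card = 2*s*k^4 →
      (∀ p ∈ P, p.Prime ∧
        (s:ℝ) * X ^ ((1:ℝ)/((m:ℝ)*((m:ℝ)+1))) < (p:ℝ) ∧
        (p:ℝ) ≤ 2*(s:ℝ) * X ^ ((1:ℝ)/((m:ℝ)*((m:ℝ)+1)))) →
    ∀ b : ℤ, 0 ≤ b → b < ((∏ i, pr i : ℕ) : ℤ) →
      IsCoprime b ((∏ i, pr i : ℕ) : ℤ) →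
    ∃ p ∈ P, ∃ a : ℤ, 0 ≤ a ∧ a < (p:ℤ) ∧
      IsCoprime (b + a * ((∏ i, pr i : ℕ) : ℤ)) ((p:ℤ) * ((∏ i, pr i : ℕ) : ℤ)) ∧
      (Icount s k m X (∏ i, pr i) b : ℝ) ≤
        C * (p:ℝ) ^ (2*(s:ℝ) - 2*(m:ℝ) + 3*(m:ℝ)*((m:ℝ)+1)/2) *
          (Icount (s-m) k (m+1) X (p * ∏ i, pr i) (b + a * ((∏ i, pr i : ℕ) : ℤ)) : ℝ) := by
  obtain ⟨n, rfl⟩ : ∃ n, m = n + 1 := ⟨m - 1, by omega⟩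
  obtain ⟨r, rfl⟩ : ∃ r, s = n + 1 + r := ⟨s - (n + 1), by omega⟩
  obtain ⟨C, hC, X₀, h⟩ := exists_Icount_le n k r (by omega) hk (by omega)
  refine ⟨C, hC, X₀, fun X hX pr hpr P hcard hP b hb0 hbq hcop => ?_⟩
  obtain ⟨p, hp, a, ha0, hap, hacop, hle⟩ := h X hX pr hpr P hcard
    (fun p hp => ⟨(hP p hp).1, (hP p hp).2.1⟩) b hb0 hbq hcop
  refine ⟨p, hp, a, ha0, hap, hacop, ?_⟩
  have hexp : 2 * ((n + 1 + r : ℕ) : ℝ) - 2 * ((n + 1 : ℕ) : ℝ) +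
      3 * ((n + 1 : ℕ) : ℝ) * (((n + 1 : ℕ) : ℝ) + 1) / 2 =
      ((2 * r + (n + 1) * (n + 2) / 2 + (n + 1) * (n + 2) : ℕ) : ℝ) := by
    obtain ⟨c, hc⟩ : 2 ∣ (n + 1) * (n + 2) := (Nat.even_mul_succ_self (n + 1)).two_dvd
    have hc' : ((n : ℝ) + 1) * (n + 2) = 2 * c := by exact_mod_cast hc
    rw [hc, Nat.mul_div_cancel_left c two_pos]
    push_cast
    linear_combination (3 / 2 : ℝ) * hc'
  rw [hexp, Real.rpow_natCast, Nat.add_sub_cancel_left]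
  exact hle
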